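/- arXiv:0906.3657 — 2 statements merged into one kernel-verified Lean document; each statement's English description precedes it below -/
import Mathlib

section
/- Let b>0, d∈ℕ and let (G_n)_{n≥0} be a (b,d)-expander. For any c∈(0,1) there exists a sequence (p_n^*(c))_n of reals, bounded away from zero and one, such that for every ε>0: (i) if (p_n)_n is a sequence with p_n ≥ p_n^*(c)+ε for all n, then μ_{n,p_n}(L_n^{(1)} ≥ c|V_n|) → 1 as n→∞; and (ii) if p_n ≤ p_n^*(c)−ε for all n, then μ_{n,p_n}(L_n^{(1)} ≥ c|V_n|) → 0 as n→∞. -/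
open Filter

noncomputable section

/-- The spanning subgraph of `G` determined by the configuration `x : {0,1}^E`:
an edge of `G` is retained iff its coordinate equals `true`. -/
def percoGraph {V : Type*} (G : SimpleGraph V) (x : G.edgeSet → Bool) : SimpleGraph V :=
  SimpleGraph.fromEdgeSet {e : Sym2 V | ∃ h : e ∈ G.edgeSet, x ⟨e, h⟩ = true}

/-- The vertex set of the connected component of `v` in the configuration `x`. -/
def percoComp {V : Type*} (G : SimpleGraph V) (x : G.edgeSet → Bool) (v : V) : Set V :=
  {u | (percoGraph G x).Reachable v u}

/-- The number of vertices of the connected component of `v` in the configuration `x`. -/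
def compSize {V : Type*} (G : SimpleGraph V) (x : G.edgeSet → Bool) (v : V) : ℕ :=
  (percoComp G x v).ncard

/-- `L⁽¹⁾`: the number of vertices of the largest connected component of the configuration. -/
def largestComp {V : Type*} (G : SimpleGraph V) (x : G.edgeSet → Bool) : ℕ :=
  sSup (Set.range (compSize G x))

/-- The probability of a single configuration under the product Bernoulli(p) measure. -/
def configProb {E : Type*} (p : ℝ) (x : E → Bool) : ℝ :=
  ∏ᶠ e : E, if x e then p else 1 - p

/-- The product Bernoulli(p) probability of a set of configurations. -/
def probC {E : Type*} (p : ℝ) (A : Set (E → Bool)) : ℝ :=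
  ∑ᶠ x ∈ A, configProb p x

/-- Expectation under the product Bernoulli(p) measure. -/
def expC {E : Type*} (p : ℝ) (f : (E → Bool) → ℝ) : ℝ :=
  ∑ᶠ x : E → Bool, configProb p x * f x

/-- Variance under the product Bernoulli(p) measure. -/
def varC {E : Type*} (p : ℝ) (f : (E → Bool) → ℝ) : ℝ :=
  expC p (fun x => f x ^ 2) - (expC p f) ^ 2

open Classical in
/-- The configuration `x` with coordinate `e` set to `b`. -/
def setEdge {E : Type*} (x : E → Bool) (e : E) (b : Bool) : E → Bool :=
  fun e' => if e' = e then b else x e'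

/-- The operator `Δ_{e,p} f (x) = f(x) - ∫ f(x) dx(e)`. -/
def deltaE {E : Type*} (p : ℝ) (f : (E → Bool) → ℝ) (e : E) (x : E → Bool) : ℝ :=
  f x - (p * f (setEdge x e true) + (1 - p) * f (setEdge x e false))

/-- The norm `‖g‖_{1,p}`. -/
def norm1 {E : Type*} (p : ℝ) (g : (E → Bool) → ℝ) : ℝ :=
  expC p fun x => |g x|

/-- The squared norm `‖g‖_{2,p}²`. -/
def sqNorm2 {E : Type*} (p : ℝ) (g : (E → Bool) → ℝ) : ℝ :=
  expC p fun x => g x ^ 2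

/-- `|E(S, Sᶜ)|`: the number of edges of `G` with one endpoint in `S` and the other outside `S`
(counted via the ordered pair whose first coordinate lies in `S`). -/
def edgeBoundaryCard {V : Type*} (G : SimpleGraph V) (S : Set V) : ℕ :=
  {q : V × V | G.Adj q.1 q.2 ∧ q.1 ∈ S ∧ q.2 ∉ S}.ncard

/-- The maximal degree of `G` is at most `d`. -/
def DegreeLE {V : Type*} (G : SimpleGraph V) (d : ℕ) : Prop :=
  ∀ v, {u | G.Adj v u}.ncard ≤ d

/-- The Cheeger (edge-isoperimetric) constant of `G` is strictly greater than `b`. -/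
def CheegerGT {V : Type*} (G : SimpleGraph V) (b : ℝ) : Prop :=
  ∀ S : Set V, 0 < S.ncard → 2 * S.ncard ≤ Nat.card V →
    b * (S.ncard : ℝ) < (edgeBoundaryCard G S : ℝ)

/-- A `(b,d)`-expander: a sequence of finite graphs with `|V_n| → ∞`, maximal degree at most `d`
and Cheeger constant greater than `b`. -/
structure ExpanderSeq (b : ℝ) (d : ℕ) where
  V : ℕ → Type
  finV : ∀ n, Finite (V n)
  G : ∀ n, SimpleGraph (V n)
  card_tendsto : Tendsto (fun n => Nat.card (V n)) atTop atTop
  degree_le : ∀ n, DegreeLE (G n) d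
  cheeger_gt : ∀ n, CheegerGT (G n) b


def PW {E : Type*} [Fintype E] (p : ℝ) (x : E → Bool) : ℝ := ∏ e, if x e then p else 1 - p

def Ex {E : Type*} [Fintype E] [DecidableEq E] (p : ℝ) (f : (E → Bool) → ℝ) : ℝ :=
  ∑ x : E → Bool, PW p x * f x

section prob
variable {E : Type*} [Fintype E] [DecidableEq E]

lemma PW_nonneg {p : ℝ} (h0 : 0 ≤ p) (h1 : p ≤ 1) (x : E → Bool) : 0 ≤ PW p x := by
  unfold PW
  apply Finset.prod_nonneg
  intro e _
  split_ifs <;> linarith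

lemma Ex_mono {p : ℝ} (h0 : 0 ≤ p) (h1 : p ≤ 1) {f g : (E → Bool) → ℝ} (h : ∀ x, f x ≤ g x) :
    Ex p f ≤ Ex p g := by
  unfold Ex
  apply Finset.sum_le_sum
  intro x _
  exact mul_le_mul_of_nonneg_left (h x) (PW_nonneg h0 h1 x)

lemma Ex_add (p : ℝ) (f g : (E → Bool) → ℝ) :
    Ex p (fun x => f x + g x) = Ex p f + Ex p g := by
  unfold Ex
  simp only [mul_add, Finset.sum_add_distrib]

lemma Ex_smul (p a : ℝ) (f : (E → Bool) → ℝ) :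
    Ex p (fun x => a * f x) = a * Ex p f := by
  unfold Ex
  rw [Finset.mul_sum]
  apply Finset.sum_congr rfl
  intro x _
  ring

lemma Ex_sum {ι : Type*} (s : Finset ι) (p : ℝ) (f : ι → (E → Bool) → ℝ) :
    Ex p (fun x => ∑ i ∈ s, f i x) = ∑ i ∈ s, Ex p (f i) := by
  unfold Ex
  simp only [Finset.mul_sum]
  exact Finset.sum_comm

lemma PW_sum (p : ℝ) : ∑ x : E → Bool, PW p x = 1 := by
  have h := Finset.prod_univ_sum (fun _ : E => (Finset.univ : Finset Bool))
    (fun _ b => if b then p else 1 - p)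
  simp only [Fintype.piFinset_univ] at h
  unfold PW
  rw [← h]
  simp

lemma Ex_const (p a : ℝ) : Ex p (fun _ : E → Bool => a) = a := by
  unfold Ex
  rw [← Finset.sum_mul, PW_sum, one_mul]

lemma PW_flip (p : ℝ) (x : E → Bool) (e : E) :
    PW p x * (if !(x e) then p else 1 - p) =
      PW p (Function.update x e (!(x e))) * (if x e then p else 1 - p) := by
  unfold PW
  rw [Fintype.prod_eq_mul_prod_compl e, Fintype.prod_eq_mul_prod_compl e]
  have : ∏ i ∈ ({e} : Finset E)ᶜ, (if Function.update x e (!(x e)) i then p else 1 - p)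
      = ∏ i ∈ ({e} : Finset E)ᶜ, (if x i then p else 1 - p) := by
    apply Finset.prod_congr rfl
    intro i hi
    have : i ≠ e := by simpa using hi
    simp [Function.update_of_ne this]
  rw [this]
  simp only [Function.update_self]
  ring

lemma Ex_cond (p : ℝ) (f : (E → Bool) → ℝ) (e : E) :
    Ex p (fun x => p * f (Function.update x e true) + (1 - p) * f (Function.update x e false))
      = Ex p f := by
  unfold Ex
  have h1 : ∀ x : E → Bool,
      PW p x * (p * f (Function.update x e true) + (1 - p) * f (Function.update x e false))
      = PW p x * (if x e then p else 1 - p) * f x +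
        PW p (Function.update x e (!(x e))) * (if x e then p else 1 - p)
          * f (Function.update x e (!(x e))) := by
    intro x
    rw [← PW_flip]
    have hx : Function.update x e (x e) = x := Function.update_eq_self e x
    cases hxe : x e
    · rw [hxe] at hx
      simp [hx]; ring
    · rw [hxe] at hx
      simp [hx]; ring
  simp only [h1, Finset.sum_add_distrib]
  have hinv : Function.Involutive (fun x : E → Bool => Function.update x e (!(x e))) := by
    intro x
    simp
  have h2 := Equiv.sum_comp (hinv.toPerm _) (fun x => PW p x * (if !(x e) then p else 1 - p) * f x)
  simp only [Function.Involutive.coe_toPerm, Function.update_self, Bool.not_not] at h2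
  rw [h2, ← Finset.sum_add_distrib]
  apply Finset.sum_congr rfl
  intro x _
  cases x e <;> simp <;> ring

lemma var_aux {p : ℝ} (h0 : 0 ≤ p) (h1 : p ≤ 1) (f : (E → Bool) → ℝ)
    (hf : ∀ x e b, |f (Function.update x e b) - f x| ≤ 1) (S : Finset E) :
    ∃ g : (E → Bool) → ℝ, (∀ x e b, |g (Function.update x e b) - g x| ≤ 1) ∧
      Ex p g = Ex p f ∧ (∀ e ∈ S, ∀ x b, g (Function.update x e b) = g x) ∧
      Ex p (fun x => f x ^ 2) ≤ Ex p (fun x => g x ^ 2) + S.card := by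
  induction S using Finset.induction_on with
  | empty => exact ⟨f, hf, rfl, by simp, by simp⟩
  | insert e S heS ih =>
    obtain ⟨g, g1, g2, g3, g4⟩ := ih
    refine ⟨fun x => p * g (Function.update x e true) + (1 - p) * g (Function.update x e false),
      ?_, ?_, ?_, ?_⟩
    · intro x e' b
      by_cases h : e' = e
      · subst h; simp
      · beta_reduce
        rw [Function.update_comm h, Function.update_comm h]
        have a1 := abs_le.1 (g1 (Function.update x e true) e' b)
        have a2 := abs_le.1 (g1 (Function.update x e false) e' b)
        rw [abs_le]
        constructor <;> nlinarith
    · rw [Ex_cond, g2]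
    · intro e' he' x b
      by_cases h : e' = e
      · subst h; simp
      · have : e' ∈ S := by
          rcases Finset.mem_insert.1 he' with h' | h'
          · exact absurd h' h
          · exact h'
        simp only
        rw [Function.update_comm h, Function.update_comm h, g3 e' this, g3 e' this]
    · rw [Finset.card_insert_of_notMem heS]
      have : Ex p (fun x => g x ^ 2) ≤ Ex p (fun x =>
          (p * g (Function.update x e true) + (1 - p) * g (Function.update x e false)) ^ 2 + 1) := by
        rw [← Ex_cond p (fun x => g x ^ 2) e]
        apply Ex_mono h0 h1
        intro x
        have a1 := abs_le.1 (g1 (Function.update x e true) e false)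
        rw [Function.update_idem] at a1
        have a2 : (g (Function.update x e false) - g (Function.update x e true)) ^ 2 ≤ 1 := by
          nlinarith
        have a3 : p * (1 - p) ≤ 1 := by nlinarith
        have a4 : 0 ≤ p * (1 - p) := by nlinarith
        nlinarith [mul_le_mul a3 a2 (sq_nonneg _) zero_le_one]
      rw [Ex_add, Ex_const] at this
      push_cast
      linarith

lemma var_bound {p : ℝ} (h0 : 0 ≤ p) (h1 : p ≤ 1) (f : (E → Bool) → ℝ)
    (hf : ∀ x e b, |f (Function.update x e b) - f x| ≤ 1) :
    Ex p (fun x => (f x - Ex p f) ^ 2) ≤ Fintype.card E := by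
  obtain ⟨g, -, g2, g3, g4⟩ := var_aux h0 h1 f hf Finset.univ
  have hc : ∀ x y, g x = g y := by
    intro x y
    have : ∀ S : Finset E, g (fun e => if e ∈ S then y e else x e) = g x := by
      intro S
      induction S using Finset.induction_on with
      | empty => simp
      | insert e S heS ih =>
        rw [← ih, ← g3 e (Finset.mem_univ e) (fun e => if e ∈ S then y e else x e) (y e)]
        congr 1
        funext e'
        by_cases h : e' = e
        · subst h; simp
        · simp [Function.update_of_ne h, h]
    have h2 := this Finset.univ
    simp at h2
    exact h2.symm
  have hg : ∀ x, g x = Ex p f := by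
    intro x
    rw [← g2]
    have : g = fun _ => g x := funext fun y => hc y x
    rw [this, Ex_const]
  have e1 : Ex p (fun x => g x ^ 2) = Ex p f ^ 2 := by
    simp only [hg, Ex_const]
  have e2 : (fun x => (f x - Ex p f) ^ 2)
      = fun x => f x ^ 2 + ((-2 * Ex p f) * f x + Ex p f ^ 2) := by
    funext x; ring
  rw [e2, Ex_add, Ex_add, Ex_smul, Ex_const]
  rw [e1] at g4
  rw [Finset.card_univ] at g4
  nlinarith

open Classical in
def Pr (p : ℝ) (A : Set (E → Bool)) : ℝ := Ex p (fun x => if x ∈ A then 1 else 0)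

lemma Pr_mono {p : ℝ} (h0 : 0 ≤ p) (h1 : p ≤ 1) {A B : Set (E → Bool)} (h : A ⊆ B) :
    Pr p A ≤ Pr p B := by
  apply Ex_mono h0 h1
  intro x
  by_cases hA : x ∈ A
  · simp [hA, h hA]
  · simp only [hA, if_false]; split_ifs <;> norm_num

lemma Pr_nonneg {p : ℝ} (h0 : 0 ≤ p) (h1 : p ≤ 1) (A : Set (E → Bool)) : 0 ≤ Pr p A := by
  rw [← Ex_const (E := E) p 0]
  apply Ex_mono h0 h1
  intro x
  split_ifs <;> norm_num

lemma Pr_le_one {p : ℝ} (h0 : 0 ≤ p) (h1 : p ≤ 1) (A : Set (E → Bool)) : Pr p A ≤ 1 := by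
  rw [← Ex_const (E := E) p 1]
  apply Ex_mono h0 h1
  intro x
  split_ifs <;> norm_num

lemma Pr_compl (p : ℝ) (A : Set (E → Bool)) : Pr p Aᶜ = 1 - Pr p A := by
  have : Pr p Aᶜ + Pr p A = 1 := by
    unfold Pr
    rw [← Ex_add]
    refine Eq.trans ?_ (Ex_const (E := E) p 1)
    congr 1
    funext x
    by_cases h : x ∈ A <;> simp [h]
  linarith

lemma Pr_markov {p : ℝ} (h0 : 0 ≤ p) (h1 : p ≤ 1) (A : Set (E → Bool)) (f : (E → Bool) → ℝ)
    (l : ℝ) (hf : ∀ x, 0 ≤ f x) (hA : ∀ x ∈ A, l ≤ f x) : l * Pr p A ≤ Ex p f := by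
  unfold Pr
  rw [← Ex_smul]
  apply Ex_mono h0 h1
  intro x
  by_cases h : x ∈ A
  · simpa [h] using hA x h
  · simpa [h] using hf x

lemma Pr_cheb {p : ℝ} (h0 : 0 ≤ p) (h1 : p ≤ 1) (A : Set (E → Bool)) (f : (E → Bool) → ℝ)
    (hf : ∀ x e b, |f (Function.update x e b) - f x| ≤ 1)
    (l : ℝ) (hl : 0 ≤ l) (hA : ∀ x ∈ A, l ≤ |f x - Ex p f|) :
    l ^ 2 * Pr p A ≤ Fintype.card E := by
  refine le_trans ?_ (var_bound h0 h1 f hf)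
  apply Pr_markov h0 h1
  · intro x; positivity
  · intro x hx
    rw [← sq_abs (f x - Ex p f)]
    exact pow_le_pow_left₀ hl (hA x hx) 2

lemma Ex_comp (p s : ℝ) (f : (E → Bool) → ℝ) :
    Ex p (fun x => Ex s (fun y => f (fun e => x e || y e))) = Ex (1 - (1 - p) * (1 - s)) f := by
  have key : ∀ z : E → Bool, PW (1 - (1 - p) * (1 - s)) z =
      ∑ q : E → Bool × Bool, if (fun e => (q e).1 || (q e).2) = z then
        ∏ e, ((if (q e).1 then p else 1 - p) * (if (q e).2 then s else 1 - s)) else 0 := by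
    intro z
    have h := Finset.prod_univ_sum
      (fun e : E => (Finset.univ.filter (fun q : Bool × Bool => (q.1 || q.2) = z e)))
      (fun _ q => (if q.1 then p else 1 - p) * (if q.2 then s else 1 - s))
    rw [← Finset.sum_filter]
    have h2 : Fintype.piFinset (fun e : E =>
        (Finset.univ.filter (fun q : Bool × Bool => (q.1 || q.2) = z e)))
        = Finset.univ.filter (fun q : E → Bool × Bool => (fun e => (q e).1 || (q e).2) = z) := by
      ext q
      simp [Fintype.mem_piFinset, funext_iff]
    rw [← h2, ← h]
    unfold PW
    apply Finset.prod_congr rfl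
    intro e _
    rw [Finset.sum_filter, Fintype.sum_prod_type]
    cases z e <;> simp <;> ring
  unfold Ex
  simp only [key, Finset.sum_mul]
  rw [Finset.sum_comm]
  simp only [ite_mul, zero_mul, Finset.sum_ite_eq, Finset.mem_univ, if_true]
  rw [← Equiv.sum_comp (Equiv.arrowProdEquivProdArrow E (fun _ => Bool) (fun _ => Bool)).symm]
  rw [Fintype.sum_prod_type]
  apply Finset.sum_congr rfl
  intro x _
  rw [Finset.mul_sum]
  apply Finset.sum_congr rfl
  intro y _
  rw [← mul_assoc]
  unfold PW
  rw [← Finset.prod_mul_distrib]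
  refine congrArg₂ _ (Finset.prod_congr rfl fun e _ => ?_) rfl
  by_cases h : x e = true
  · simp [Equiv.arrowProdEquivProdArrow, h]
  · simp [Equiv.arrowProdEquivProdArrow, h]

lemma Ex_prodopen (p : ℝ) (f : (E → Bool) → ℝ) (Z : Finset E)
    (hf : ∀ e ∈ Z, ∀ x b, f (Function.update x e b) = f x) :
    Ex p (fun x => f x * (if ∀ e ∈ Z, x e = true then 1 else 0)) = p ^ Z.card * Ex p f := by
  induction Z using Finset.induction_on with
  | empty => simp
  | insert e Z he ih =>
    have ih' := ih (fun e' h' => hf e' (Finset.mem_insert_of_mem h'))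
    rw [Finset.card_insert_of_notMem he, pow_succ', mul_assoc, ← ih',
      ← Ex_cond p _ e, ← Ex_smul]
    rw [← Ex_cond p (fun x => p * _) e]
    congr 1
    funext x
    have hZ : ∀ b, (∀ a ∈ Z, Function.update x e b a = true) ↔ (∀ a ∈ Z, x a = true) := by
      intro b
      apply forall₂_congr
      intro a ha
      have : a ≠ e := fun h => he (h ▸ ha)
      rw [Function.update_of_ne this]
    simp only [Finset.forall_mem_insert, hZ, Function.update_self,
      hf e (Finset.mem_insert_self e Z)]
    by_cases hh : ∀ a ∈ Z, x a = true
    · have h1 : (∀ a ∈ Z, x a = true) = True := eq_true hh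
      simp only [h1]
      simp
      ring
    · simp [hh]

lemma Ex_continuous (f : (E → Bool) → ℝ) : Continuous (fun p => Ex p f) := by
  unfold Ex PW
  apply continuous_finsetSum
  intro x _
  refine Continuous.mul ?_ continuous_const
  apply continuous_finsetProd
  intro e _
  split_ifs <;> fun_prop

lemma probC_eq_Pr (p : ℝ) (A : Set (E → Bool)) : probC p A = Pr p A := by
  unfold probC Pr Ex configProb PW
  rw [finsum_mem_eq_finite_toFinset_sum _ (Set.toFinite A)]
  simp only [mul_ite, mul_one, mul_zero]
  rw [← Finset.sum_filter]
  refine Finset.sum_congr ?_ ?_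
  · ext x; simp
  · intro x _
    rw [finprod_eq_prod_of_fintype]

end prob

section graph
open scoped Classical
variable {V : Type} [Fintype V] (G : SimpleGraph V)

def Cross (T : Finset V) (e : G.edgeSet) : Prop := ∃ u v, e.1 = s(u, v) ∧ u ∈ T ∧ v ∉ T

def bd (T : Finset V) : Finset G.edgeSet := Finset.univ.filter (Cross G T)

def inc (v : V) : Finset G.edgeSet := Finset.univ.filter (fun e => v ∈ e.1)

variable {G}

lemma cross_compl (T : Finset V) (e : G.edgeSet) : Cross G Tᶜ e ↔ Cross G T e := by
  unfold Cross
  constructor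
  · rintro ⟨u, v, h, hu, hv⟩
    refine ⟨v, u, by rw [h, Sym2.eq_swap], by simpa using hv, by simpa using hu⟩
  · rintro ⟨u, v, h, hu, hv⟩
    refine ⟨v, u, by rw [h, Sym2.eq_swap], by simpa using hv, by simpa using hu⟩

lemma bd_compl (T : Finset V) : bd G Tᶜ = bd G T := by
  unfold bd
  ext e
  simp [cross_compl]

lemma inc_card {d : ℕ} (hd : DegreeLE G d) (v : V) : (inc G v).card ≤ d := by
  refine le_trans ?_ (hd v)
  have h1 : (inc G v).card = ((inc G v).map (Function.Embedding.subtype _)).card := by simp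
  rw [h1, ← Set.ncard_coe_finset]
  have h2 : (((inc G v).map (Function.Embedding.subtype _) : Finset (Sym2 V)) : Set (Sym2 V))
      ⊆ (fun u => s(v, u)) '' {u | G.Adj v u} := by
    intro e he
    simp only [inc, Finset.coe_map, Set.mem_image, Finset.mem_coe, Finset.mem_filter,
      Finset.mem_univ, true_and] at he
    obtain ⟨e', he', rfl⟩ := he
    obtain ⟨u, hu⟩ := Sym2.mem_iff_exists.1 he'
    refine ⟨u, ?_, hu.symm⟩
    have := e'.2
    rw [hu] at this
    exact this
  exact (Set.ncard_le_ncard h2 (Set.toFinite _)).trans (Set.ncard_image_le (Set.toFinite _))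

lemma card_le_out {d : ℕ} (hd : DegreeLE G d) (F : Finset G.edgeSet) (O : Finset V)
    (h : ∀ e ∈ F, ∃ v ∈ O, v ∈ e.1) : F.card ≤ d * O.card := by
  have h1 : F ⊆ O.biUnion (inc G) := by
    intro e he
    obtain ⟨v, hv, hve⟩ := h e he
    exact Finset.mem_biUnion.2 ⟨v, hv, by simp [inc, hve]⟩
  refine (Finset.card_le_card h1).trans ?_
  rw [mul_comm]
  exact Finset.card_biUnion_le_card_mul _ _ _ (fun v _ => inc_card hd v)

lemma card_edges {d : ℕ} (hd : DegreeLE G d) : Fintype.card G.edgeSet ≤ d * Fintype.card V := by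
  rw [← Finset.card_univ, ← Finset.card_univ]
  apply card_le_out hd
  rintro ⟨e, he⟩ _
  induction e using Sym2.ind with
  | _ u v => exact ⟨u, Finset.mem_univ _, by simp⟩

lemma edgeBoundary_le (T : Finset V) : edgeBoundaryCard G (T : Set V) ≤ (bd G T).card := by
  unfold edgeBoundaryCard
  have h1 : (bd G T).card = ((bd G T).map (Function.Embedding.subtype _)).card := by simp
  rw [h1, ← Set.ncard_coe_finset]
  apply Set.ncard_le_ncard_of_injOn (fun q : V × V => s(q.1, q.2))
  · rintro ⟨u, v⟩ ⟨h, hu, hv⟩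
    simp only [Finset.coe_map, Set.mem_image, Finset.mem_coe]
    refine ⟨⟨s(u, v), h⟩, ?_, rfl⟩
    simp only [bd, Finset.mem_filter, Finset.mem_univ, true_and]
    exact ⟨u, v, rfl, hu, hv⟩
  · rintro ⟨u, v⟩ ⟨h, hu, hv⟩ ⟨u', v'⟩ ⟨h', hu', hv'⟩ hq
    simp only [Sym2.eq_iff] at hq
    simp only at hu hv hu' hv'
    rcases hq with ⟨rfl, rfl⟩ | ⟨rfl, rfl⟩
    · rfl
    · exact absurd hu hv'

lemma bd_ge {b : ℝ} (hb : 0 < b) (hG : CheegerGT G b) (T : Finset V) (t : ℝ) (ht : 0 < t)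
    (h1 : t ≤ T.card) (h2 : t ≤ (Tᶜ : Finset V).card) : b * t ≤ (bd G T).card := by
  have main : ∀ T : Finset V, t ≤ T.card → 2 * T.card ≤ Fintype.card V →
      b * t ≤ (bd G T).card := by
    intro T h hT
    have hpos : 0 < T.card := by
      have : (0 : ℝ) < T.card := lt_of_lt_of_le ht h
      exact_mod_cast this
    have h3 := hG (T : Set V) (by rwa [Set.ncard_coe_finset])
      (by rwa [Set.ncard_coe_finset, Nat.card_eq_fintype_card])
    rw [Set.ncard_coe_finset] at h3
    have h4 : (edgeBoundaryCard G (T : Set V) : ℝ) ≤ (bd G T).card := by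
      exact_mod_cast edgeBoundary_le T
    nlinarith
  by_cases hT : 2 * T.card ≤ Fintype.card V
  · exact main T h1 hT
  · rw [← bd_compl]
    apply main _ h2
    rw [Finset.card_compl]
    omega

lemma short_conn {b : ℝ} (hb : 0 < b) {d : ℕ} (hd : DegreeLE G d) (hG : CheegerGT G b)
    (S S' : Finset V) (U : Finset G.edgeSet) (t : ℝ) (ht : 0 < t) (hS : t ≤ S.card)
    (hS' : t ≤ S'.card) (hU : (U.card : ℝ) ≤ b * t / 2) (K : ℕ)
    (hK : (d : ℝ) * Fintype.card V < K * (b * t / 2)) :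
    ∃ Z : Finset G.edgeSet, Disjoint Z U ∧ Z.card ≤ K ∧
      ∀ T : Finset V, S ⊆ T → Disjoint T S' → ∃ e ∈ Z, Cross G T e := by
  by_contra hno
  have claim : ∀ r : ℕ, r ≤ K → ∃ B : Finset V, S ⊆ B ∧
      (∀ v ∈ B, ∃ Z : Finset G.edgeSet, Disjoint Z U ∧ Z.card ≤ r ∧
        ∀ T : Finset V, S ⊆ T → v ∉ T → ∃ e ∈ Z, Cross G T e) ∧
      (r : ℝ) * (b * t / 2) ≤ d * B.card := by
    intro r
    induction r with
    | zero =>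
      intro _
      refine ⟨S, subset_rfl, ?_, by simp; positivity⟩
      intro v hv
      exact ⟨∅, by simp, by simp, fun T hT hvT => absurd (hT hv) hvT⟩
    | succ r ih =>
      intro hr
      obtain ⟨B, hSB, hB, hBc⟩ := ih (by omega)
      have hdis : Disjoint B S' := by
        rw [Finset.disjoint_left]
        intro v hv hv'
        obtain ⟨Z, z1, z2, z3⟩ := hB v hv
        exact hno ⟨Z, z1, by omega, fun T h1 h2 => z3 T h1 (fun h => Finset.disjoint_left.1 h2 h hv')⟩
      have hBt : t ≤ B.card := hS.trans (by exact_mod_cast Finset.card_le_card hSB)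
      have hBt' : t ≤ (Bᶜ : Finset V).card := by
        refine hS'.trans ?_
        have : S' ⊆ Bᶜ := by
          intro v hv
          rw [Finset.mem_compl]
          exact fun h => Finset.disjoint_left.1 hdis h hv
        exact_mod_cast Finset.card_le_card this
      have hbd := bd_ge hb hG B t ht hBt hBt'
      set O : Finset V := Finset.univ.filter
        (fun v => v ∉ B ∧ ∃ e : G.edgeSet, e ∉ U ∧ ∃ u ∈ B, e.1 = s(u, v)) with hO
      have hF : (bd G B \ U).card ≤ d * O.card := by
        apply card_le_out hd
        intro e he
        rw [Finset.mem_sdiff] at he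
        obtain ⟨he, heU⟩ := he
        simp only [bd, Finset.mem_filter, Finset.mem_univ, true_and] at he
        obtain ⟨u, v, h, hu, hv⟩ := he
        refine ⟨v, ?_, by rw [h]; simp⟩
        simp only [hO, Finset.mem_filter, Finset.mem_univ, true_and]
        exact ⟨hv, e, heU, u, hu, h⟩
      have hF2 : (bd G B).card ≤ (bd G B \ U).card + U.card := by
        have := Finset.le_card_sdiff U (bd G B)
        omega
      have hF' : ((bd G B \ U).card : ℝ) ≤ d * O.card := by exact_mod_cast hF
      have hF2' : ((bd G B).card : ℝ) ≤ (bd G B \ U).card + U.card := by exact_mod_cast hF2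
      have hdisO : Disjoint B O := by
        rw [Finset.disjoint_left]
        intro v hv hvO
        simp only [hO, Finset.mem_filter, Finset.mem_univ, true_and] at hvO
        exact hvO.1 hv
      refine ⟨B ∪ O, hSB.trans Finset.subset_union_left, ?_, ?_⟩
      · intro v hv
        rcases Finset.mem_union.1 hv with hv | hv
        · obtain ⟨Z, z1, z2, z3⟩ := hB v hv
          exact ⟨Z, z1, by omega, z3⟩
        · simp only [hO, Finset.mem_filter, Finset.mem_univ, true_and] at hv
          obtain ⟨hvB, e, heU, u, hu, he⟩ := hv
          obtain ⟨Z, z1, z2, z3⟩ := hB u hu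
          refine ⟨insert e Z, ?_, ?_, ?_⟩
          · rw [Finset.disjoint_insert_left]
            exact ⟨heU, z1⟩
          · exact (Finset.card_insert_le _ _).trans (by omega)
          · intro T hT hvT
            by_cases huT : u ∈ T
            · exact ⟨e, Finset.mem_insert_self _ _, u, v, he, huT, hvT⟩
            · obtain ⟨e', h1, h2⟩ := z3 T hT huT
              exact ⟨e', Finset.mem_insert_of_mem h1, h2⟩
      · rw [Finset.card_union_of_disjoint hdisO]
        push_cast
        nlinarith
  obtain ⟨B, -, -, hB⟩ := claim K le_rfl
  have : (B.card : ℝ) ≤ Fintype.card V := by exact_mod_cast Finset.card_le_univ B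
  have : (d : ℝ) * B.card ≤ d * Fintype.card V := by gcongr
  linarith

def Closed (x : G.edgeSet → Bool) (T : Finset V) : Prop := ∀ e, x e = true → ¬ Cross G T e

lemma prob_sep {b : ℝ} (hb : 0 < b) {d : ℕ} (hd : DegreeLE G d) (hG : CheegerGT G b)
    (S S' : Finset V) (t : ℝ) (ht : 0 < t) (hS : t ≤ S.card)
    (hS' : t ≤ S'.card) (K : ℕ)
    (hK : (d : ℝ) * Fintype.card V < K * (b * t / 2)) (r : ℝ) (h0 : 0 ≤ r) (h1 : r ≤ 1)
    (m : ℕ) (hm : (m : ℝ) * K ≤ b * t / 2) :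
    Pr r {y : G.edgeSet → Bool | ∃ T : Finset V, S ⊆ T ∧ Disjoint T S' ∧ Closed y T}
      ≤ (1 - r ^ K) ^ m := by
  set A := {y : G.edgeSet → Bool | ∃ T : Finset V, S ⊆ T ∧ Disjoint T S' ∧ Closed y T} with hA
  have claim : ∀ j : ℕ, j ≤ m → ∃ (U : Finset G.edgeSet) (f : (G.edgeSet → Bool) → ℝ),
      U.card ≤ j * K ∧ (∀ e, e ∉ U → ∀ x b, f (Function.update x e b) = f x) ∧
      (∀ x, 0 ≤ f x) ∧ (∀ x ∈ A, 1 ≤ f x) ∧ Ex r f ≤ (1 - r ^ K) ^ j := by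
    intro j
    induction j with
    | zero =>
      intro _
      exact ⟨∅, fun _ => 1, by simp, by simp, by simp, by simp, by simp [Ex_const]⟩
    | succ j ih =>
      intro hj
      obtain ⟨U, f, f1, f2, f3, f4, f5⟩ := ih (by omega)
      have hU : (U.card : ℝ) ≤ b * t / 2 := by
        refine le_trans ?_ hm
        have : U.card ≤ m * K := f1.trans (Nat.mul_le_mul_right _ (by omega))
        exact_mod_cast this
      obtain ⟨Z, z1, z2, z3⟩ := short_conn hb hd hG S S' U t ht hS hS' hU K hK
      refine ⟨U ∪ Z, fun x => f x * (1 - if ∀ e ∈ Z, x e = true then 1 else 0), ?_, ?_, ?_, ?_, ?_⟩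
      · refine (Finset.card_union_le _ _).trans ?_
        rw [Nat.succ_mul]
        omega
      · intro e he x b
        rw [Finset.notMem_union] at he
        have : (∀ e' ∈ Z, Function.update x e b e' = true) ↔ (∀ e' ∈ Z, x e' = true) := by
          apply forall₂_congr
          intro a ha
          have : a ≠ e := fun h => he.2 (h ▸ ha)
          rw [Function.update_of_ne this]
        simp only [this, f2 e he.1]
      · intro x
        apply mul_nonneg (f3 x)
        split_ifs <;> norm_num
      · intro x hx
        have : ¬ ∀ e ∈ Z, x e = true := by
          intro hall
          obtain ⟨T, t1, t2, t3⟩ := hx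
          obtain ⟨e, he, hc⟩ := z3 T t1 t2
          exact t3 e (hall e he) hc
        simp only [this, if_false, sub_zero, mul_one]
        exact f4 x hx
      · have e1 : (fun x => f x * (1 - if ∀ e ∈ Z, x e = true then (1 : ℝ) else 0)) =
            fun x => f x + (-1) * (f x * (if ∀ e ∈ Z, x e = true then (1 : ℝ) else 0)) := by
          funext x; ring
        rw [e1, Ex_add, Ex_smul]
        rw [Ex_prodopen r f Z (fun e he => f2 e (Finset.disjoint_left.1 z1 he))]
        have hp : r ^ K ≤ r ^ Z.card := pow_le_pow_of_le_one h0 h1 z2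
        have hp1 : r ^ K ≤ 1 := pow_le_one₀ h0 h1
        have hE : 0 ≤ Ex r f := by
          rw [← Ex_const (E := G.edgeSet) r 0]
          exact Ex_mono h0 h1 f3
        calc Ex r f + -1 * (r ^ Z.card * Ex r f) = (1 - r ^ Z.card) * Ex r f := by ring
          _ ≤ (1 - r ^ K) * Ex r f := by gcongr
          _ ≤ (1 - r ^ K) * (1 - r ^ K) ^ j := by
            apply mul_le_mul_of_nonneg_left f5; linarith
          _ = _ := by ring
  obtain ⟨U, f, -, -, f3, f4, f5⟩ := claim m le_rfl
  refine le_trans ?_ f5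
  have := Pr_markov h0 h1 A f 1 f3 f4
  linarith

def comp (x : G.edgeSet → Bool) (v : V) : Finset V := Finset.univ.filter (· ∈ percoComp G x v)

lemma comp_card (x : G.edgeSet → Bool) (v : V) : (comp x v).card = compSize G x v := by
  unfold compSize
  rw [← Set.ncard_coe_finset]
  congr 1
  ext u
  simp [comp]

lemma comp_le_largest (x : G.edgeSet → Bool) (v : V) : (comp x v).card ≤ largestComp G x := by
  rw [comp_card]
  exact le_csSup (Set.finite_range _).bddAbove ⟨v, rfl⟩

lemma exists_largest (x : G.edgeSet → Bool) (h : 0 < largestComp G x) :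
    ∃ v, (comp x v).card = largestComp G x := by
  have hne : (Set.range (compSize G x)).Nonempty := by
    by_contra hne
    rw [Set.not_nonempty_iff_eq_empty] at hne
    unfold largestComp at h
    rw [hne] at h
    simp at h
  obtain ⟨v, hv⟩ := Nat.sSup_mem hne (Set.finite_range _).bddAbove
  exact ⟨v, by rw [comp_card, hv]; rfl⟩

lemma perco_adj (x : G.edgeSet → Bool) (e : G.edgeSet) (he : x e = true) (u v : V)
    (h : e.1 = s(u, v)) : (percoGraph G x).Adj u v := by
  unfold percoGraph
  rw [SimpleGraph.fromEdgeSet_adj]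
  refine ⟨⟨h ▸ e.2, ?_⟩, ?_⟩
  · rw [← he]; congr 1; exact Subtype.ext h.symm
  · have := e.2
    rw [h] at this
    exact G.ne_of_adj this

lemma adj_perco (x : G.edgeSet → Bool) (u v : V) (h : (percoGraph G x).Adj u v) :
    ∃ e : G.edgeSet, x e = true ∧ e.1 = s(u, v) := by
  unfold percoGraph at h
  rw [SimpleGraph.fromEdgeSet_adj] at h
  obtain ⟨⟨h1, h2⟩, -⟩ := h
  exact ⟨⟨_, h1⟩, h2, rfl⟩

lemma mem_comp {x : G.edgeSet → Bool} {u v : V} :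
    u ∈ comp x v ↔ (percoGraph G x).Reachable v u := by
  unfold comp
  rw [Finset.mem_filter]
  exact ⟨fun h => h.2, fun h => ⟨Finset.mem_univ _, h⟩⟩

lemma mem_comp_self (x : G.edgeSet → Bool) (v : V) : v ∈ comp x v := by
  rw [mem_comp]

lemma mem_comp_step (x : G.edgeSet → Bool) (v u w : V) (e : G.edgeSet) (he : x e = true)
    (h : e.1 = s(u, w)) (hu : u ∈ comp x v) : w ∈ comp x v := by
  simp only [mem_comp] at hu ⊢
  exact hu.trans (perco_adj x e he u w h).reachable

lemma comp_closed (x : G.edgeSet → Bool) (v : V) : Closed x (comp x v) := by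
  rintro e he ⟨u, w, h, hu, hw⟩
  exact hw (mem_comp_step x v u w e he h hu)

lemma comp_mono {x y : G.edgeSet → Bool} (h : ∀ e, x e = true → y e = true) (v : V) :
    comp x v ⊆ comp y v := by
  intro u hu
  simp only [mem_comp] at hu ⊢
  refine hu.mono ?_
  intro a c hac
  obtain ⟨e, he, hs⟩ := adj_perco x a c hac
  exact perco_adj y e (h e he) a c hs

lemma closed_sdiff {x : G.edgeSet → Bool} {T D : Finset V} (hT : Closed x T) (hD : Closed x D) :
    Closed x (T \ D) := by
  rintro e he ⟨u, v, h, hu, hv⟩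
  rw [Finset.mem_sdiff] at hu hv
  by_cases hvT : v ∈ T
  · have hvD : v ∈ D := by
      by_contra hh; exact hv ⟨hvT, hh⟩
    exact hD e he ⟨v, u, by rw [h, Sym2.eq_swap], hvD, hu.2⟩
  · exact hT e he ⟨u, v, h, hu.1, hvT⟩

lemma balanced (x : G.edgeSet → Bool) (C : Finset V) (t : ℝ) (ht : 0 < t) (h3 : 3 * t ≤ C.card)
    (h : ∀ v, ((comp x v ∩ C).card : ℝ) < C.card - t) :
    ∃ T : Finset V, Closed x T ∧ t ≤ (T ∩ C).card ∧ t ≤ (C \ T).card := by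
  have hne : (Finset.univ.filter (fun T : Finset V => Closed x T ∧ t ≤ (T ∩ C).card)).Nonempty := by
    refine ⟨Finset.univ, ?_⟩
    simp only [Finset.mem_filter, Finset.mem_univ, true_and, Finset.univ_inter]
    refine ⟨?_, by linarith⟩
    rintro e he ⟨u, v, h, hu, hv⟩
    exact hv (Finset.mem_univ _)
  obtain ⟨T, hT, hmin⟩ := Finset.exists_min_image _ (fun T : Finset V => (T ∩ C).card) hne
  simp only [Finset.mem_filter, Finset.mem_univ, true_and] at hT hmin
  refine ⟨T, hT.1, hT.2, ?_⟩
  by_contra hlt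
  push Not at hlt
  have hs : (C \ T).card + (T ∩ C).card = C.card := by
    rw [Finset.inter_comm]; exact Finset.card_sdiff_add_card_inter C T
  have hs' : ((C \ T).card : ℝ) + (T ∩ C).card = C.card := by exact_mod_cast hs
  have hpos : 0 < (T ∩ C).card := by
    have : (0 : ℝ) < (T ∩ C).card := by linarith
    exact_mod_cast this
  obtain ⟨v, hv⟩ := Finset.card_pos.1 hpos
  have hD := comp_closed x v
  have hlt2 : ((T \ comp x v) ∩ C).card < (T ∩ C).card := by
    apply Finset.card_lt_card
    refine ⟨Finset.inter_subset_inter_right Finset.sdiff_subset, ?_⟩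
    intro hsub
    have := hsub hv
    rw [Finset.mem_inter, Finset.mem_sdiff] at this
    exact this.1.2 (mem_comp_self x v)
  have hlt3 : (((T \ comp x v) ∩ C).card : ℝ) < t := by
    by_contra hge
    push Not at hge
    have := hmin _ ⟨closed_sdiff hT.1 hD, hge⟩
    omega
  have hle : (T ∩ C).card ≤ ((T \ comp x v) ∩ C).card + (comp x v ∩ C).card := by
    refine le_trans (Finset.card_le_card ?_) (Finset.card_union_le _ _)
    intro u hu
    simp only [Finset.mem_union, Finset.mem_inter, Finset.mem_sdiff] at hu ⊢
    tauto
  have hle' : ((T ∩ C).card : ℝ) ≤ ((T \ comp x v) ∩ C).card + (comp x v ∩ C).card := by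
    exact_mod_cast hle
  have h5 := hmin _ ⟨hD, by linarith⟩
  have h5' : ((T ∩ C).card : ℝ) ≤ (comp x v ∩ C).card := by exact_mod_cast h5
  have := h v
  linarith

def Cl (x : G.edgeSet → Bool) (C : Finset V) : Finset (Finset V) :=
  C.powerset.filter (fun S => ∀ e, x e = true → ∀ u v, e.1 = s(u, v) → u ∈ C → v ∈ C →
    (u ∈ S ↔ v ∈ S))

lemma mem_Cl {x : G.edgeSet → Bool} {C S : Finset V} : S ∈ Cl x C ↔ S ⊆ C ∧
    ∀ e, x e = true → ∀ u v, e.1 = s(u, v) → u ∈ C → v ∈ C → (u ∈ S ↔ v ∈ S) := by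
  simp [Cl]

lemma Cl_pos (x : G.edgeSet → Bool) (C : Finset V) : 0 < (Cl x C).card :=
  Finset.card_pos.2 ⟨∅, by simp [mem_Cl]⟩

lemma Cl_double (x x' : G.edgeSet → Bool) (e : G.edgeSet) (h : ∀ e', e' ≠ e → x e' = x' e')
    (C : Finset V) : (Cl x C).card ≤ 2 * (Cl x' C).card := by
  set R : Finset V → Prop := fun S => ∀ u v, e.1 = s(u, v) → u ∈ C → v ∈ C → (u ∈ S ↔ v ∈ S)
    with hR
  rw [← Finset.card_filter_add_card_filter_not (s := Cl x C) R, two_mul]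
  apply add_le_add
  · apply Finset.card_le_card
    intro S hS
    rw [Finset.mem_filter, mem_Cl] at hS
    rw [mem_Cl]
    refine ⟨hS.1.1, fun e' he' => ?_⟩
    by_cases hee : e' = e
    · subst hee; exact hS.2
    · exact hS.1.2 e' (by rw [h e' hee, he'])
  · by_cases hne : ((Cl x C).filter (fun S => ¬ R S)).Nonempty
    · obtain ⟨S0, hS0⟩ := hne
      apply Finset.card_le_card_of_injOn (fun S => symmDiff S S0)
      · intro S hS
        rw [Finset.mem_coe, Finset.mem_filter, mem_Cl] at hS
        rw [Finset.mem_filter, mem_Cl] at hS0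
        rw [Finset.mem_coe, mem_Cl]
        refine ⟨?_, ?_⟩
        · intro u hu
          rw [Finset.mem_symmDiff] at hu
          rcases hu with hu | hu
          · exact hS.1.1 hu.1
          · exact hS0.1.1 hu.1
        · intro e' he' u v huv hu hv
          by_cases hee : e' = e
          · subst hee
            have g1 := hS.2
            have g2 := hS0.2
            simp only [hR] at g1 g2
            push Not at g1 g2
            obtain ⟨a, c, hac, -, -, g1⟩ := g1
            obtain ⟨a', c', hac', -, -, g2⟩ := g2
            rw [huv] at hac hac'
            rw [Sym2.eq_iff] at hac hac'
            simp only [Finset.mem_symmDiff]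
            rcases hac with ⟨rfl, rfl⟩ | ⟨rfl, rfl⟩ <;> rcases hac' with ⟨rfl, rfl⟩ | ⟨rfl, rfl⟩ <;>
              tauto
          · have g1 := hS.1.2 e' (by rw [h e' hee, he']) u v huv hu hv
            have g2 := hS0.1.2 e' (by rw [h e' hee, he']) u v huv hu hv
            simp only [Finset.mem_symmDiff, g1, g2]
      · intro S _ S' _ hSS
        exact symmDiff_left_injective S0 hSS
    · rw [Finset.not_nonempty_iff_eq_empty] at hne
      rw [hne]; simp

lemma Cl_comp (x : G.edgeSet → Bool) (v : V) : (Cl x (comp x v)).card ≤ 2 := by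
  have : Cl x (comp x v) ⊆ {∅, comp x v} := by
    intro S hS
    rw [mem_Cl] at hS
    have key : ∀ w, w ∈ comp x v → (w ∈ S ↔ v ∈ S) := by
      intro w hw
      simp only [mem_comp] at hw
      rw [SimpleGraph.reachable_iff_reflTransGen] at hw
      induction hw with
      | refl => rfl
      | tail hab hbc ih =>
        rename_i a c
        obtain ⟨e, he, hs⟩ := adj_perco x _ _ hbc
        have ha : a ∈ comp x v := by
          simp only [mem_comp]
          rw [SimpleGraph.reachable_iff_reflTransGen]
          exact hab
        rw [← ih]
        exact (hS.2 e he _ _ hs ha (mem_comp_step x v _ _ e he hs ha)).symm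
    rw [Finset.mem_insert, Finset.mem_singleton]
    by_cases hv : v ∈ S
    · right
      exact Finset.Subset.antisymm hS.1 (fun w hw => (key w hw).2 hv)
    · left
      rw [Finset.eq_empty_iff_forall_notMem]
      exact fun w hw => hv ((key w (hS.1 hw)).1 hw)
  exact (Finset.card_le_card this).trans Finset.card_le_two

end graph

section prob2
variable {E : Type*} [Fintype E] [DecidableEq E]

lemma Pr_union {ι : Type*} {p : ℝ} (h0 : 0 ≤ p) (h1 : p ≤ 1) (A : Set (E → Bool)) (s : Finset ι)
    (B : ι → Set (E → Bool)) (h : ∀ x ∈ A, ∃ i ∈ s, x ∈ B i) :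
    Pr p A ≤ ∑ i ∈ s, Pr p (B i) := by
  unfold Pr
  rw [← Ex_sum]
  apply Ex_mono h0 h1
  intro x
  by_cases hx : x ∈ A
  · obtain ⟨i, hi, hxi⟩ := h x hx
    simp only [hx, if_true]
    classical
    refine le_trans ?_ (Finset.single_le_sum (fun j _ => ?_) hi)
    · simp [hxi]
    · split_ifs <;> norm_num
  · simp only [hx, if_false]
    apply Finset.sum_nonneg
    intro i _
    split_ifs <;> norm_num

lemma Ex_count (p : ℝ) (F : Finset E) :
    Ex p (fun x => ∑ e ∈ F, if x e = true then (1 : ℝ) else 0) = p * F.card := by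
  rw [Ex_sum]
  have : ∀ e ∈ F, Ex p (fun x : E → Bool => if x e = true then (1 : ℝ) else 0) = p := by
    intro e _
    have := Ex_prodopen p (fun _ : E → Bool => 1) {e} (by simp)
    simpa [Ex_const] using this
  rw [Finset.sum_congr rfl this]
  simp [mul_comm]

lemma count_lip (F : Finset E) (x : E → Bool) (e : E) (b : Bool) :
    |(∑ e' ∈ F, if Function.update x e b e' = true then (1 : ℝ) else 0)
      - ∑ e' ∈ F, if x e' = true then (1 : ℝ) else 0| ≤ 1 := by
  rw [← Finset.sum_sub_distrib]
  by_cases he : e ∈ F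
  · rw [Finset.sum_eq_single_of_mem e he]
    · split_ifs <;> simp
    · intro e' _ hne
      rw [Function.update_of_ne hne]; simp
  · rw [Finset.sum_eq_zero]
    · simp
    · intro e' he' 
      have : e' ≠ e := fun h => he (h ▸ he')
      rw [Function.update_of_ne this]; simp

lemma Pr_chain {p s : ℝ} (h0 : 0 ≤ p) (h1 : p ≤ 1) (s0 : 0 ≤ s) (s1 : s ≤ 1)
    (Bad B : Set (E → Bool)) (ε : ℝ) (hε : 0 ≤ ε)
    (h : ∀ x, x ∉ Bad → Pr s {y | (fun e => x e || y e) ∈ B} ≤ ε) :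
    Pr (1 - (1 - p) * (1 - s)) B ≤ Pr p Bad + ε := by
  classical
  conv_lhs => unfold Pr
  rw [← Ex_comp]
  have : Pr p Bad + ε = Ex p (fun x => (if x ∈ Bad then 1 else 0) + ε) := by
    rw [Ex_add, Ex_const]
    unfold Pr
    congr
  rw [this]
  apply Ex_mono h0 h1
  intro x
  by_cases hx : x ∈ Bad
  · simp only [hx, if_true]
    have : (Ex s fun y => if (fun e => x e || y e) ∈ B then (1:ℝ) else 0) ≤ 1 :=
      Pr_le_one s0 s1 {y | (fun e => x e || y e) ∈ B}
    refine le_trans ?_ (this.trans (by linarith : (1:ℝ) ≤ 1 + ε))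
    apply le_of_eq
    congr
  · simp only [hx, if_false, zero_add]
    have : (Ex s fun y => if (fun e => x e || y e) ∈ B then (1:ℝ) else 0) ≤ ε := h x hx
    refine le_trans (le_of_eq ?_) this
    congr

lemma Pr_mono_p {p q : ℝ} (h0 : 0 ≤ p) (hpq : p ≤ q) (hq : q ≤ 1) (B : Set (E → Bool))
    (hB : ∀ x y : E → Bool, x ∈ B → (fun e => x e || y e) ∈ B) : Pr p B ≤ Pr q B := by
  rcases eq_or_lt_of_le (hpq.trans hq) with h | h
  · have : q = p := by linarith
    rw [this]
  have hs0 : 0 ≤ (q - p) / (1 - p) := div_nonneg (by linarith) (by linarith)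
  have hs1 : (q - p) / (1 - p) ≤ 1 := by rw [div_le_one (by linarith)]; linarith
  have hq' : q = 1 - (1 - p) * (1 - (q - p) / (1 - p)) := by
    have : 1 - p ≠ 0 := by linarith
    field_simp
    ring
  have hc := Pr_chain (E := E) h0 h.le hs0 hs1 Bᶜ Bᶜ 0 le_rfl (by
    intro x hx
    have hx' : x ∈ B := by simpa using hx
    have : {y : E → Bool | (fun e => x e || y e) ∈ Bᶜ} = ∅ := by
      ext y
      simp [hB x y hx']
    rw [this]
    unfold Pr
    simp [Ex_const])
  rw [← hq', Pr_compl, Pr_compl] at hc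
  linarith

end prob2

section steps
open scoped Classical
variable {V : Type} [Fintype V] {G : SimpleGraph V}

lemma step1 {d : ℕ} (hd : DegreeLE G d) {p : ℝ} (h0 : 0 ≤ p) (h1 : p ≤ 1) (c κ δ : ℝ)
    (hc1 : c ≤ 1) (hκ : 0 < κ) (hδ : 0 < δ)
    (hcN : 0 < c * Fintype.card V) (hN1 : 4 ≤ κ * Fintype.card V)
    (hN2 : 16 * d < δ * κ ^ 2 * Fintype.card V)
    (hA : δ ≤ Pr p {x : G.edgeSet → Bool | c * Fintype.card V ≤ largestComp G x}) :
    Pr p {x : G.edgeSet → Bool | ¬ ∃ C : Finset V, c * Fintype.card V ≤ C.card ∧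
      ((Cl x C).card : ℝ) ≤ Real.exp (κ * Fintype.card V)} ≤ δ := by
  set N : ℝ := (Fintype.card V : ℝ) with hN
  have hNpos : 0 < N := by
    by_contra hh
    have : N = 0 := le_antisymm (not_lt.1 hh) (by positivity)
    rw [this] at hcN; simp at hcN
  set 𝓕 : Finset (Finset V) := Finset.univ.filter (fun C => c * N ≤ C.card) with h𝓕
  have hne : 𝓕.Nonempty := by
    refine ⟨Finset.univ, ?_⟩
    simp only [h𝓕, Finset.mem_filter, Finset.mem_univ, true_and, Finset.card_univ]
    rw [← hN]; nlinarith
  set f : (G.edgeSet → Bool) → ℝ := fun x => 𝓕.inf' hne (fun C => Real.log (Cl x C).card) with hf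
  have hlog2 : Real.log 2 ≤ 1 := by
    have := Real.log_two_lt_d9; linarith
  have hone : ∀ x x' : G.edgeSet → Bool, ∀ e, (∀ e', e' ≠ e → x e' = x' e') →
      f x ≤ f x' + 1 := by
    intro x x' e h
    obtain ⟨C, hC, hCf⟩ := Finset.exists_mem_eq_inf' hne (fun C => Real.log (Cl x' C).card)
    have h2 : f x ≤ Real.log (Cl x C).card :=
      Finset.inf'_le (fun C => Real.log (Cl x C).card) hC
    have h3 : Real.log (Cl x C).card ≤ Real.log 2 + Real.log (Cl x' C).card := by
      have p1 : (0 : ℝ) < (Cl x C).card := by exact_mod_cast Cl_pos x C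
      have p2 : (0 : ℝ) < (Cl x' C).card := by exact_mod_cast Cl_pos x' C
      rw [← Real.log_mul (by norm_num) p2.ne']
      apply Real.log_le_log p1
      exact_mod_cast Cl_double x x' e h C
    have h4 : f x' = Real.log (Cl x' C).card := hCf
    linarith
  have hlip : ∀ x e b, |f (Function.update x e b) - f x| ≤ 1 := by
    intro x e b
    have a1 := hone x (Function.update x e b) e (fun e' h => (Function.update_of_ne h _ _).symm)
    have a2 := hone (Function.update x e b) x e (fun e' h => Function.update_of_ne h _ _)
    rw [abs_le]; constructor <;> linarith
  have hcard : (Fintype.card G.edgeSet : ℝ) ≤ d * N := by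
    rw [hN]; exact_mod_cast card_edges hd
  have hfA : ∀ x ∈ {x : G.edgeSet → Bool | c * N ≤ largestComp G x}, f x ≤ 1 := by
    intro x hx
    have hx' : c * N ≤ largestComp G x := hx
    have hpos : 0 < largestComp G x := by
      have : (0 : ℝ) < largestComp G x := lt_of_lt_of_le hcN hx'
      exact_mod_cast this
    obtain ⟨v, hv⟩ := exists_largest x hpos
    have hmem : comp x v ∈ 𝓕 := by
      simp only [h𝓕, Finset.mem_filter, Finset.mem_univ, true_and]
      rw [hv]; exact hx'
    have h2 : f x ≤ Real.log (Cl x (comp x v)).card :=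
      Finset.inf'_le (fun C => Real.log (Cl x C).card) hmem
    have h3 : Real.log (Cl x (comp x v)).card ≤ Real.log 2 := by
      apply Real.log_le_log
      · exact_mod_cast Cl_pos x _
      · exact_mod_cast Cl_comp x v
    linarith
  have hE : Ex p f ≤ κ * N / 2 := by
    by_contra hh
    push Not at hh
    have := Pr_cheb h0 h1 (f := f) (l := κ * N / 4) (hl := by positivity) (hf := hlip) (A := {x : G.edgeSet → Bool | c * N ≤ largestComp G x}) (by
      intro x hx
      have := hfA x hx
      rw [abs_sub_comm]
      refine le_trans ?_ (le_abs_self _)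
      linarith)
    have h5 : (κ * N / 4) ^ 2 * δ ≤ d * N :=
      (mul_le_mul_of_nonneg_left hA (by positivity)).trans (this.trans hcard)
    nlinarith
  have := Pr_cheb h0 h1 (f := f) (l := κ * N / 4) (hl := by positivity) (hf := hlip) (A := {x : G.edgeSet → Bool | ¬ ∃ C : Finset V, c * N ≤ C.card ∧
      ((Cl x C).card : ℝ) ≤ Real.exp (κ * N)}) (by
      intro x hx
      refine le_trans ?_ (le_abs_self _)
      have : κ * N < f x := by
        by_contra hle
        push Not at hle
        apply hx
        obtain ⟨C, hC, hCf⟩ := Finset.exists_mem_eq_inf' hne (fun C => Real.log (Cl x C).card)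
        have h4 : f x = Real.log (Cl x C).card := hCf
        refine ⟨C, ?_, ?_⟩
        · simpa [h𝓕] using hC
        · rw [← Real.log_le_iff_le_exp (by exact_mod_cast Cl_pos x C)]
          linarith
      linarith)
  by_contra hh
  replace hh := not_le.1 hh
  have h5 : (κ * N / 4) ^ 2 * δ ≤ d * N :=
      (mul_le_mul_of_nonneg_left hh.le (by positivity)).trans (this.trans hcard)
  nlinarith

lemma largest_mono {x y : G.edgeSet → Bool} (h : ∀ e, x e = true → y e = true) :
    largestComp G x ≤ largestComp G y := by
  rcases Nat.eq_zero_or_pos (largestComp G x) with h0 | h0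
  · omega
  · obtain ⟨v, hv⟩ := exists_largest x h0
    rw [← hv]
    exact (Finset.card_le_card (comp_mono h v)).trans (comp_le_largest y v)

lemma step2 {b : ℝ} (hb : 0 < b) {d : ℕ} (hd : DegreeLE G d) (hG : CheegerGT G b)
    (x : G.edgeSet → Bool) (C : Finset V) (c η M : ℝ) (hη : 0 < η) (h3 : 3 * η ≤ c)
    (hNpos : 0 < (Fintype.card V : ℝ))
    (hC : c * Fintype.card V ≤ C.card) (hM : ((Cl x C).card : ℝ) ≤ M) (K : ℕ)
    (hK : (d : ℝ) < K * (b * η / 2)) (r : ℝ) (h0 : 0 ≤ r) (h1 : r ≤ 1)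
    (m : ℕ) (hm : (m : ℝ) * K ≤ b * (η * Fintype.card V) / 2) :
    Pr r {y : G.edgeSet → Bool | (fun e => x e || y e) ∈
      {z : G.edgeSet → Bool | (largestComp G z : ℝ) < (c - η) * Fintype.card V}}
      ≤ M * (1 - r ^ K) ^ m := by
  set N : ℝ := (Fintype.card V : ℝ) with hN
  set good := (Cl x C).filter (fun S => η * N ≤ S.card ∧ η * N ≤ (C \ S).card) with hgood
  have hu := Pr_union h0 h1 {y : G.edgeSet → Bool | (fun e => x e || y e) ∈
      {z : G.edgeSet → Bool | (largestComp G z : ℝ) < (c - η) * N}} good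
      (fun S => {y : G.edgeSet → Bool | ∃ T : Finset V, S ⊆ T ∧ Disjoint T (C \ S) ∧ Closed y T}) (by
    intro y hy
    have hy' : (largestComp G (fun e => x e || y e) : ℝ) < (c - η) * N := hy
    obtain ⟨T, t1, t2, t3⟩ := balanced (fun e => x e || y e) C (η * N) (by positivity)
      (by nlinarith) (by
        intro v
        have a1 : ((comp (fun e => x e || y e) v ∩ C).card : ℝ) ≤
            largestComp G (fun e => x e || y e) := by
          exact_mod_cast (Finset.card_le_card Finset.inter_subset_left).trans
            (comp_le_largest _ v)
        nlinarith)
    refine ⟨T ∩ C, ?_, T, Finset.inter_subset_left, ?_, ?_⟩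
    · rw [hgood, Finset.mem_filter, mem_Cl]
      refine ⟨⟨Finset.inter_subset_right, ?_⟩, t2, ?_⟩
      · intro e he u v huv hu hv
        have hz := t1 e (by simp [he])
        simp only [Finset.mem_inter, hu, hv, and_true]
        constructor
        · intro huT
          by_contra hvT
          exact hz ⟨u, v, huv, huT, hvT⟩
        · intro hvT
          by_contra huT
          exact hz ⟨v, u, by rw [huv, Sym2.eq_swap], hvT, huT⟩
      · have : C \ (T ∩ C) = C \ T := by
          ext u; simp only [Finset.mem_sdiff, Finset.mem_inter]; tauto
        rw [this]; exact t3
    · rw [Finset.disjoint_left]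
      intro u hu hu'
      simp only [Finset.mem_sdiff, Finset.mem_inter] at hu'
      tauto
    · intro e he
      exact t1 e (by simp [he]))
  refine hu.trans ?_
  have hq : 0 ≤ 1 - r ^ K := by
    have := pow_le_one₀ (n := K) h0 h1; linarith
  have hs : ∀ S ∈ good, Pr r {y : G.edgeSet → Bool | ∃ T : Finset V, S ⊆ T ∧
      Disjoint T (C \ S) ∧ Closed y T} ≤ (1 - r ^ K) ^ m := by
    intro S hS
    rw [hgood, Finset.mem_filter] at hS
    refine prob_sep hb hd hG S (C \ S) (η * N) (by positivity) hS.2.1 hS.2.2 K ?_ r h0 h1 m hm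
    rw [← hN]
    nlinarith
  refine (Finset.sum_le_sum hs).trans ?_
  rw [Finset.sum_const, nsmul_eq_mul]
  apply mul_le_mul_of_nonneg_right _ (by positivity)
  refine le_trans ?_ hM
  exact_mod_cast Finset.card_le_card (Finset.filter_subset _ _)

lemma step3 {b : ℝ} (hb : 0 < b) {d : ℕ} (hd : DegreeLE G d) (hG : CheegerGT G b)
    (x : G.edgeSet → Bool) (c η θ : ℝ) (hη : 0 < η) (hθ : 0 < θ)
    (hθ1 : θ ≤ c / 2) (hθ2 : θ ≤ 1 - c) (hηc : η ≤ c / 2)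
    (hNpos : 0 < (Fintype.card V : ℝ)) (r : ℝ) (h0 : 0 < r) (h1 : r ≤ 1)
    (hdη : d * η ≤ r * b * θ / 2)
    (hx : (c - η) * Fintype.card V ≤ largestComp G x) :
    (r * b * θ / 2 * Fintype.card V) ^ 2 *
      Pr r {y : G.edgeSet → Bool | (fun e => x e || y e) ∈
        {z : G.edgeSet → Bool | (largestComp G z : ℝ) < c * Fintype.card V}}
      ≤ d * Fintype.card V := by
  set N : ℝ := (Fintype.card V : ℝ) with hN
  have hpos : 0 < largestComp G x := by
    have : (0 : ℝ) < largestComp G x := lt_of_lt_of_le (by apply mul_pos; linarith; exact hNpos) hx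
    exact_mod_cast this
  obtain ⟨v, hv⟩ := exists_largest x hpos
  have hcard : (Fintype.card G.edgeSet : ℝ) ≤ d * N := by
    rw [hN]; exact_mod_cast card_edges hd
  refine le_trans ?_ hcard
  set F := bd G (comp x v) with hF
  refine Pr_cheb h0.le h1 _ (fun y => ∑ e ∈ F, if y e = true then (1 : ℝ) else 0)
    (count_lip F) _ (by positivity) ?_
  intro y hy
  have hy' : (largestComp G (fun e => x e || y e) : ℝ) < c * N := hy
  have hsub : comp x v ⊆ comp (fun e => x e || y e) v := comp_mono (by intro e he; simp [he]) v
  have hle1 : (largestComp G x : ℝ) ≤ largestComp G (fun e => x e || y e) := by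
    exact_mod_cast largest_mono (by intro e he; simp [he])
  have hA1 : (c - η) * N ≤ (comp x v).card := by rw [hv]; exact hx
  have hA2 : ((comp x v).card : ℝ) < c * N := by rw [hv]; linarith
  have hbd := bd_ge hb hG (comp x v) (θ * N) (by positivity) (by nlinarith) (by
    rw [Finset.card_compl, Nat.cast_sub (Finset.card_le_univ _), ← hN]
    nlinarith)
  rw [← hF] at hbd
  set O := comp (fun e => x e || y e) v \ comp x v with hO
  have hX : (F.filter (fun e => y e = true)).card ≤ d * O.card := by
    apply card_le_out hd
    intro e he
    rw [Finset.mem_filter] at he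
    obtain ⟨he, hye⟩ := he
    simp only [hF, bd, Finset.mem_filter, Finset.mem_univ, true_and] at he
    obtain ⟨u, w, huw, hu, hw⟩ := he
    refine ⟨w, ?_, by rw [huw]; simp⟩
    rw [hO, Finset.mem_sdiff]
    exact ⟨mem_comp_step _ v u w e (by simp [hye]) huw (hsub hu), hw⟩
  have hOc : (O.card : ℝ) + (comp x v).card ≤ largestComp G (fun e => x e || y e) := by
    have := Finset.card_sdiff_add_card_eq_card hsub
    rw [← hO] at this
    have h2 := comp_le_largest (fun e => x e || y e) v
    rw [← this] at h2
    exact_mod_cast h2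
  have hO2 : (O.card : ℝ) ≤ η * N := by nlinarith
  have hX' : ((F.filter (fun e => y e = true)).card : ℝ) ≤ d * O.card := by exact_mod_cast hX
  have hX2 : (d : ℝ) * O.card ≤ d * (η * N) := by gcongr
  rw [Ex_count, abs_sub_comm]
  refine le_trans ?_ (le_abs_self _)
  rw [Finset.sum_boole]
  have g1 : r * (b * (θ * N)) ≤ r * F.card := by gcongr
  nlinarith

lemma low {d : ℕ} (hd : DegreeLE G d) {p : ℝ} (h0 : 0 ≤ p) (h1 : p ≤ 1) (c : ℝ)
    (hN : 2 ≤ c * Fintype.card V) :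
    (c * Fintype.card V / 2) *
      Pr p {x : G.edgeSet → Bool | c * Fintype.card V ≤ largestComp G x}
      ≤ p * (d * Fintype.card V) := by
  have hcard : (Fintype.card G.edgeSet : ℝ) ≤ d * Fintype.card V := by
    exact_mod_cast card_edges hd
  refine le_trans ?_ (mul_le_mul_of_nonneg_left hcard h0)
  rw [← Finset.card_univ (α := G.edgeSet), ← Ex_count p (Finset.univ : Finset G.edgeSet)]
  apply Pr_markov h0 h1
  · intro x
    apply Finset.sum_nonneg
    intro e _
    split_ifs <;> norm_num
  intro x hx
  have hx' : c * Fintype.card V ≤ largestComp G x := hx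
  have h2 : 2 ≤ largestComp G x := by
    have : (2 : ℝ) ≤ largestComp G x := hN.trans hx'
    exact_mod_cast this
  obtain ⟨v, hv⟩ := exists_largest x (by omega)
  rw [Finset.sum_boole]
  set O := Finset.univ.filter (fun e => x e = true) with hO
  have hsub : comp x v ⊆ O.biUnion (fun e => Finset.univ.filter (fun u => u ∈ e.1)) := by
    intro u hu
    obtain ⟨w, hw, hne⟩ := Finset.exists_mem_ne (by omega : 1 < (comp x v).card) u
    simp only [mem_comp] at hu hw
    have hr : (percoGraph G x).Reachable u w := hu.symm.trans hw
    obtain ⟨q⟩ := hr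
    cases q with
    | nil => exact absurd rfl hne
    | cons hadj _ =>
      obtain ⟨e, he, hs⟩ := adj_perco x _ _ hadj
      rw [Finset.mem_biUnion]
      refine ⟨e, by simp [hO, he], ?_⟩
      simp [hs]
  have hle : (comp x v).card ≤ O.card * 2 := by
    refine (Finset.card_le_card hsub).trans (Finset.card_biUnion_le_card_mul _ _ _ ?_)
    rintro ⟨e, he⟩ _
    induction e using Sym2.ind with
    | _ a c =>
      refine (Finset.card_le_card (?_ : _ ⊆ ({a, c} : Finset V))).trans Finset.card_le_two
      intro u hu
      simpa using hu
  rw [hv] at hle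
  have hle' : (largestComp G x : ℝ) ≤ O.card * 2 := by exact_mod_cast hle
  linarith

lemma high {b : ℝ} (hb : 0 < b) {d : ℕ} (hd : DegreeLE G d) (hG : CheegerGT G b)
    {p : ℝ} (h0 : 0 ≤ p) (h1 : p ≤ 1) (c η : ℝ) (hη : 0 < η) (hη1 : η ≤ 1 / 3) (hη2 : η ≤ 1 - c)
    (hN : 0 < (Fintype.card V : ℝ)) :
    (b * (η * Fintype.card V)) *
      Pr p {x : G.edgeSet → Bool | c * Fintype.card V ≤ largestComp G x}ᶜ
      ≤ (1 - p) * (d * Fintype.card V) := by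
  have hcard : (Fintype.card G.edgeSet : ℝ) ≤ d * Fintype.card V := by
    exact_mod_cast card_edges hd
  refine le_trans ?_ (mul_le_mul_of_nonneg_left hcard (by linarith))
  have hE : Ex p (fun x : G.edgeSet → Bool => (Fintype.card G.edgeSet : ℝ) +
      (-1) * ∑ e ∈ Finset.univ, if x e = true then (1 : ℝ) else 0) =
      (1 - p) * Fintype.card G.edgeSet := by
    rw [Ex_add, Ex_smul, Ex_const, Ex_count, Finset.card_univ]
    ring
  have hform : ∀ x : G.edgeSet → Bool, (Fintype.card G.edgeSet : ℝ) +
      (-1) * ∑ e ∈ Finset.univ, (if x e = true then (1 : ℝ) else 0) =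
      (Finset.univ.filter (fun e => ¬ x e = true)).card := by
    intro x
    rw [Finset.sum_boole, ← Finset.card_univ,
      ← Finset.card_filter_add_card_filter_not (s := Finset.univ) (fun e => x e = true)]
    push_cast
    ring
  rw [← hE]
  apply Pr_markov h0 h1
  · intro x
    rw [hform]; positivity
  intro x hx
  have hx' : (largestComp G x : ℝ) < c * Fintype.card V := by
    simpa using hx
  obtain ⟨T, t1, t2, t3⟩ := balanced x Finset.univ (η * Fintype.card V) (by positivity)
    (by rw [Finset.card_univ]; nlinarith) (by
      intro v
      rw [Finset.inter_univ, Finset.card_univ]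
      have : ((comp x v).card : ℝ) ≤ largestComp G x := by exact_mod_cast comp_le_largest x v
      nlinarith)
  rw [Finset.inter_univ] at t2
  rw [hform]
  refine (bd_ge hb hG T _ (by positivity) t2 t3).trans ?_
  have : bd G T ⊆ Finset.univ.filter (fun e => ¬ x e = true) := by
    intro e he
    simp only [bd, Finset.mem_filter, Finset.mem_univ, true_and] at he ⊢
    exact fun h => t1 e h he
  exact_mod_cast Finset.card_le_card this

end steps

section final
open scoped Classical

lemma up_closed {V : Type} [Fintype V] {G : SimpleGraph V} (a : ℝ) (x y : G.edgeSet → Bool)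
    (hx : x ∈ {x : G.edgeSet → Bool | a ≤ largestComp G x}) :
    (fun e => x e || y e) ∈ {x : G.edgeSet → Bool | a ≤ largestComp G x} := by
  have h1 : a ≤ largestComp G x := hx
  have h2 : (largestComp G x : ℝ) ≤ largestComp G (fun e => x e || y e) := by
    exact_mod_cast largest_mono (by intro e he; simp [he])
  exact h1.trans h2

set_option maxHeartbeats 1600000 in
lemma key {b : ℝ} (hb : 0 < b) (d : ℕ) {c : ℝ} (hc0 : 0 < c) (hc1 : c < 1) {δ : ℝ} (hδ : 0 < δ)
    {s : ℝ} (s0 : 0 < s) (s1 : s ≤ 1) :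
    ∃ N0 : ℕ, ∀ (V : Type) [Fintype V] (G : SimpleGraph V), DegreeLE G d → CheegerGT G b →
      N0 ≤ Fintype.card V → ∀ p q : ℝ, 0 ≤ p → p ≤ 1 → 1 - (1 - p) * (1 - s) ≤ q → q ≤ 1 →
      δ ≤ Pr p {x : G.edgeSet → Bool | c * Fintype.card V ≤ largestComp G x} →
      1 - δ ≤ Pr q {x : G.edgeSet → Bool | c * Fintype.card V ≤ largestComp G x} := by
  obtain ⟨r, hr⟩ : ∃ r, r = s / 2 := ⟨_, rfl⟩
  have r0 : 0 < r := by linarith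
  have r1 : r ≤ 1 := by linarith
  obtain ⟨θ, hθ⟩ : ∃ θ, θ = min (c / 2) (1 - c) := ⟨_, rfl⟩
  have θ0 : 0 < θ := by rw [hθ]; apply lt_min <;> linarith
  have θ1 : θ ≤ c / 2 := by rw [hθ]; exact min_le_left _ _
  have θ2 : θ ≤ 1 - c := by rw [hθ]; exact min_le_right _ _
  obtain ⟨η, hη⟩ : ∃ η, η = min (c / 3) (r * b * θ / (2 * (d + 1))) := ⟨_, rfl⟩
  have η0 : 0 < η := by rw [hη]; apply lt_min; linarith; positivity
  have η1 : η ≤ c / 3 := by rw [hη]; exact min_le_left _ _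
  have η2 : η ≤ r * b * θ / (2 * (d + 1)) := by rw [hη]; exact min_le_right _ _
  have η3 : d * η ≤ r * b * θ / 2 := by
    rw [le_div_iff₀ (by positivity)] at η2
    nlinarith
  obtain ⟨K, hK⟩ := exists_nat_gt (d / (b * η / 2))
  rw [div_lt_iff₀ (by positivity)] at hK
  have K0 : (0 : ℝ) < K := by
    have : (0 : ℝ) ≤ d := by positivity
    by_contra hh
    have : (K : ℝ) * (b * η / 2) ≤ 0 := mul_nonpos_of_nonpos_of_nonneg (not_lt.1 hh) (by positivity)
    linarith
  obtain ⟨γ, hγ⟩ : ∃ γ, γ = b * η / (2 * K) := ⟨_, rfl⟩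
  have γ0 : 0 < γ := by rw [hγ]; positivity
  have γK : γ * K = b * η / 2 := by rw [hγ]; field_simp
  obtain ⟨κ, hκ⟩ : ∃ κ, κ = r ^ K * γ / 2 := ⟨_, rfl⟩
  have κ0 : 0 < κ := by rw [hκ]; positivity
  have T : Tendsto (fun N : ℕ => (N : ℝ)) atTop atTop := tendsto_natCast_atTop_atTop
  have c1 : ∀ᶠ N : ℕ in atTop, 4 ≤ κ * N := (T.const_mul_atTop κ0).eventually_ge_atTop 4
  have c2 : ∀ᶠ N : ℕ in atTop, 16 * (d : ℝ) < δ / 3 * κ ^ 2 * N :=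
    (T.const_mul_atTop (by positivity : 0 < δ / 3 * κ ^ 2)).eventually_gt_atTop _
  have c3 : ∀ᶠ N : ℕ in atTop, r ^ K - Real.log (δ / 3) ≤ κ * N :=
    (T.const_mul_atTop κ0).eventually_ge_atTop _
  have c4 : ∀ᶠ N : ℕ in atTop, (d : ℝ) ≤ δ / 3 * (r * b * θ / 2) ^ 2 * N :=
    (T.const_mul_atTop (by positivity : 0 < δ / 3 * (r * b * θ / 2) ^ 2)).eventually_ge_atTop _
  have c5 : ∀ᶠ N : ℕ in atTop, (1 : ℝ) ≤ N := T.eventually_ge_atTop _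
  obtain ⟨N0, hN0⟩ := eventually_atTop.1 (c1.and (c2.and (c3.and (c4.and c5))))
  refine ⟨N0, ?_⟩
  intro V _ G hd hG hN p q p0 p1 hpq q1 hA
  obtain ⟨k1, k2, k3, k4, k5⟩ := hN0 _ hN
  have hNpos : (0 : ℝ) < Fintype.card V := by linarith
  have S1 := step1 hd p0 p1 c κ (δ / 3) hc1.le κ0 (by positivity) (by positivity) k1 k2
    (le_trans (by linarith) hA)
  obtain ⟨m, hm⟩ : ∃ m : ℕ, m = ⌊γ * Fintype.card V⌋₊ := ⟨_, rfl⟩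
  have m1 : (m : ℝ) ≤ γ * Fintype.card V := by rw [hm]; exact Nat.floor_le (by positivity)
  have m2 : γ * Fintype.card V - 1 ≤ m := by
    have := Nat.lt_floor_add_one (γ * (Fintype.card V : ℝ))
    rw [← hm] at this; linarith
  have hmK : (m : ℝ) * K ≤ b * (η * Fintype.card V) / 2 := by
    calc (m : ℝ) * K ≤ γ * Fintype.card V * K := by gcongr
      _ = (γ * K) * Fintype.card V := by ring
      _ = _ := by rw [γK]; ring
  have hbound : Real.exp (κ * Fintype.card V) * (1 - r ^ K) ^ m ≤ δ / 3 := by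
    have e1 : (1 - r ^ K) ^ m ≤ Real.exp (-(r ^ K) * m) := by
      have : 1 - r ^ K ≤ Real.exp (-(r ^ K)) := by
        have := Real.add_one_le_exp (-(r ^ K)); linarith
      calc (1 - r ^ K) ^ m ≤ Real.exp (-(r ^ K)) ^ m := by
            apply pow_le_pow_left₀ _ this
            have := pow_le_one₀ (n := K) r0.le r1; linarith
        _ = _ := by rw [← Real.exp_nat_mul]; ring_nf
    calc Real.exp (κ * Fintype.card V) * (1 - r ^ K) ^ m
        ≤ Real.exp (κ * Fintype.card V) * Real.exp (-(r ^ K) * m) := by gcongr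
      _ = Real.exp (κ * Fintype.card V + -(r ^ K) * m) := by rw [Real.exp_add]
      _ ≤ Real.exp (Real.log (δ / 3)) := by
        apply Real.exp_le_exp.2
        have : r ^ K * (γ * Fintype.card V - 1) ≤ r ^ K * m := by gcongr
        have e2 : r ^ K * (γ * Fintype.card V) = 2 * (κ * Fintype.card V) := by rw [hκ]; ring
        linarith
      _ = δ / 3 := Real.exp_log (by positivity)
  have C1 := Pr_chain p0 p1 r0.le r1 (B := {z : G.edgeSet → Bool |
    (largestComp G z : ℝ) < (c - η) * Fintype.card V}) (ε := δ / 3) (hε := by positivity) (Bad :=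
      {x : G.edgeSet → Bool | ¬ ∃ C : Finset V, c * Fintype.card V ≤ C.card ∧
      ((Cl x C).card : ℝ) ≤ Real.exp (κ * Fintype.card V)}) (by
    intro x hx
    have hx' : ∃ C : Finset V, c * Fintype.card V ≤ C.card ∧
      ((Cl x C).card : ℝ) ≤ Real.exp (κ * Fintype.card V) := by
      by_contra hh
      exact hx hh
    obtain ⟨C, hC, hCM⟩ := hx'
    exact (step2 hb hd hG x C c η _ η0 (by linarith) hNpos hC hCM K hK r r0.le r1 m hmK).trans hbound)
  have q0 : 0 ≤ (1 - p) * (1 - r) := mul_nonneg (by linarith) (by linarith)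
  have q0' : (1 - p) * (1 - r) ≤ 1 := by nlinarith
  have C2 := Pr_chain (p := 1 - (1 - p) * (1 - r)) (by linarith) (by linarith) r0.le r1
    {z : G.edgeSet → Bool | (largestComp G z : ℝ) < (c - η) * Fintype.card V}
    {z : G.edgeSet → Bool | (largestComp G z : ℝ) < c * Fintype.card V} (δ / 3) (by positivity) (by
    intro x hx
    have hx' : (c - η) * Fintype.card V ≤ largestComp G x := not_lt.1 hx
    have := step3 hb hd hG x c η θ η0 θ0 θ1 θ2 (by linarith) hNpos r r0 r1 η3 hx'
    have hpos : 0 < (r * b * θ / 2 * Fintype.card V) ^ 2 := by positivity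
    refine le_of_mul_le_mul_left (this.trans ?_) hpos
    calc (d : ℝ) * Fintype.card V
        ≤ (δ / 3 * (r * b * θ / 2) ^ 2 * Fintype.card V) * Fintype.card V := by gcongr
      _ = _ := by ring)
  have hcompl : {z : G.edgeSet → Bool | (largestComp G z : ℝ) < c * Fintype.card V} =
      {x : G.edgeSet → Bool | c * Fintype.card V ≤ largestComp G x}ᶜ := by
    ext z
    rw [Set.mem_compl_iff]
    exact (not_le (a := c * (Fintype.card V : ℝ)) (b := (largestComp G z : ℝ))).symm
  rw [hcompl, Pr_compl] at C2
  have hM := Pr_mono_p (p := 1 - (1 - (1 - (1 - p) * (1 - r))) * (1 - r)) (q := q)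
    (by nlinarith) (by
      refine le_trans ?_ hpq
      have : (1 - s) ≤ (1 - r) * (1 - r) := by rw [hr]; nlinarith
      have := mul_le_mul_of_nonneg_left this (by linarith : 0 ≤ 1 - p)
      linarith) q1
    {x : G.edgeSet → Bool | c * Fintype.card V ≤ largestComp G x} (up_closed _)
  linarith

lemma mid {b : ℝ} (hb : 0 < b) (d : ℕ) {c : ℝ} (hc0 : 0 < c) (hc1 : c < 1) :
    ∃ a a' : ℝ, 0 < a ∧ a ≤ a' ∧ a' < 1 ∧
    ∃ N0 : ℕ, ∀ (V : Type) [Fintype V] (G : SimpleGraph V), DegreeLE G d → CheegerGT G b →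
      N0 ≤ Fintype.card V → ∃ p ∈ Set.Icc a a',
        Pr p {x : G.edgeSet → Bool | c * Fintype.card V ≤ largestComp G x} = 1 / 2 := by
  obtain ⟨a, ha⟩ : ∃ a, a = c / (8 * (d + 1)) := ⟨_, rfl⟩
  obtain ⟨η, hη⟩ : ∃ η, η = min (1 / 3) (1 - c) := ⟨_, rfl⟩
  have η0 : 0 < η := by rw [hη]; apply lt_min <;> linarith
  have η1 : η ≤ 1 / 3 := by rw [hη]; exact min_le_left _ _
  have η2 : η ≤ 1 - c := by rw [hη]; exact min_le_right _ _
  obtain ⟨w, hw⟩ : ∃ w, w = min (1 / 2) (b * η / (4 * (d + 1))) := ⟨_, rfl⟩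
  have w0 : 0 < w := by rw [hw]; apply lt_min; norm_num; positivity
  have w1 : w ≤ 1 / 2 := by rw [hw]; exact min_le_left _ _
  have w2 : w ≤ b * η / (4 * (d + 1)) := by rw [hw]; exact min_le_right _ _
  have hd0 : (0 : ℝ) ≤ d := by positivity
  have a0 : 0 < a := by rw [ha]; positivity
  have a1 : a * (8 * (d + 1)) = c := by rw [ha]; field_simp
  have a2 : a ≤ 1 / 2 := by nlinarith
  rw [le_div_iff₀ (by positivity)] at w2
  refine ⟨a, 1 - w, a0, by linarith, by linarith, ?_⟩
  have T : Tendsto (fun N : ℕ => (N : ℝ)) atTop atTop := tendsto_natCast_atTop_atTop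
  have c1 : ∀ᶠ N : ℕ in atTop, 2 ≤ c * N := (T.const_mul_atTop hc0).eventually_ge_atTop 2
  have c5 : ∀ᶠ N : ℕ in atTop, (1 : ℝ) ≤ N := T.eventually_ge_atTop _
  obtain ⟨N0, hN0⟩ := eventually_atTop.1 (c1.and c5)
  refine ⟨N0, ?_⟩
  intro V _ G hd hG hN
  obtain ⟨k1, k2⟩ := hN0 _ hN
  have hNpos : (0 : ℝ) < Fintype.card V := by linarith
  have L := low hd a0.le (by linarith) c k1
  have H := high hb hd hG (p := 1 - w) (by linarith) (by linarith) c η η0 η1 η2 hNpos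
  rw [Pr_compl] at H
  have hL : Pr a {x : G.edgeSet → Bool | c * Fintype.card V ≤ largestComp G x} ≤ 1 / 2 := by
    refine le_of_mul_le_mul_left (L.trans ?_) (by positivity : 0 < c * Fintype.card V / 2)
    rw [← a1]
    have : 0 ≤ a * Fintype.card V := by positivity
    nlinarith
  have hH : 1 / 2 ≤ Pr (1 - w) {x : G.edgeSet → Bool | c * Fintype.card V ≤ largestComp G x} := by
    have : 1 - Pr (1 - w) {x : G.edgeSet → Bool | c * Fintype.card V ≤ largestComp G x} ≤ 1 / 2 := by
      refine le_of_mul_le_mul_left (H.trans ?_) (by positivity : 0 < b * (η * Fintype.card V))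
      have g : w * (4 * (d + 1)) * Fintype.card V ≤ b * η * Fintype.card V := by gcongr
      have : 0 ≤ w * Fintype.card V := by positivity
      have : 0 ≤ w * Fintype.card V * d := by positivity
      nlinarith
    linarith
  have hcont : Continuous (fun p => Pr p {x : G.edgeSet → Bool |
      c * Fintype.card V ≤ largestComp G x}) := Ex_continuous _
  exact intermediate_value_Icc (by linarith : a ≤ 1 - w) hcont.continuousOn ⟨hL, hH⟩

end final

/-- sharp threshold for the appearance of a giant component of proportion `c`
in a `(b,d)`-expander. -/
theorem stmt0 (b : ℝ) (hb : 0 < b) (d : ℕ) (E : ExpanderSeq b d)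
    (c : ℝ) (hc : c ∈ Set.Ioo (0 : ℝ) 1) :
    ∃ pstar : ℕ → ℝ, ∃ a a' : ℝ, 0 < a ∧ a' < 1 ∧ (∀ n, pstar n ∈ Set.Icc a a') ∧
      ∀ ε : ℝ, 0 < ε →
        (∀ p : ℕ → ℝ, (∀ n, p n ∈ Set.Icc (0 : ℝ) 1) → (∀ n, pstar n + ε ≤ p n) →
          Tendsto (fun n => probC (p n)
              {x : (E.G n).edgeSet → Bool |
                c * (Nat.card (E.V n) : ℝ) ≤ (largestComp (E.G n) x : ℝ)})
            atTop (nhds 1)) ∧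
        (∀ p : ℕ → ℝ, (∀ n, p n ∈ Set.Icc (0 : ℝ) 1) → (∀ n, p n ≤ pstar n - ε) →
          Tendsto (fun n => probC (p n)
              {x : (E.G n).edgeSet → Bool |
                c * (Nat.card (E.V n) : ℝ) ≤ (largestComp (E.G n) x : ℝ)})
            atTop (nhds 0)) := by
  classical
  have : ∀ n, Fintype (E.V n) := fun n => @Fintype.ofFinite _ (E.finV n)
  obtain ⟨hc0, hc1⟩ := hc
  obtain ⟨a, a', a0, haa, a1, N1, hN1⟩ := mid hb d hc0 hc1
  have hcard : ∀ n, Nat.card (E.V n) = Fintype.card (E.V n) := fun n => Nat.card_eq_fintype_card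
  have hT : Tendsto (fun n => Fintype.card (E.V n)) atTop atTop := by
    have := E.card_tendsto
    simpa only [hcard] using this
  have hex : ∀ n, ∃ p ∈ Set.Icc a a', N1 ≤ Fintype.card (E.V n) →
      Pr p {x : (E.G n).edgeSet → Bool |
        c * (Fintype.card (E.V n) : ℝ) ≤ (largestComp (E.G n) x : ℝ)} = 1 / 2 := by
    intro n
    by_cases h : N1 ≤ Fintype.card (E.V n)
    · obtain ⟨p, hp, hp2⟩ := hN1 (E.V n) (E.G n) (E.degree_le n) (E.cheeger_gt n) h
      exact ⟨p, hp, fun _ => by convert hp2⟩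
    · exact ⟨a, ⟨le_rfl, haa⟩, fun h' => absurd h' h⟩
  choose pstar hp1 hp2 using hex
  refine ⟨pstar, a, a', a0, a1, hp1, ?_⟩
  intro ε hε
  obtain ⟨s, hs⟩ : ∃ s, s = min ε (1 / 2) := ⟨_, rfl⟩
  have s0 : 0 < s := by rw [hs]; apply lt_min <;> linarith
  have s1 : s ≤ 1 := by rw [hs]; exact (min_le_right _ _).trans (by norm_num)
  have s2 : s ≤ ε := by rw [hs]; exact min_le_left _ _
  simp only [hcard, probC_eq_Pr]
  constructor
  · intro p hp hpe
    rw [Metric.tendsto_atTop]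
    intro δ' hδ'
    obtain ⟨δ, hδ⟩ : ∃ δ, δ = min (δ' / 2) (1 / 2) := ⟨_, rfl⟩
    have δ0 : 0 < δ := by rw [hδ]; apply lt_min <;> linarith
    have δ1 : δ ≤ δ' / 2 := by rw [hδ]; exact min_le_left _ _
    have δ2 : δ ≤ 1 / 2 := by rw [hδ]; exact min_le_right _ _
    obtain ⟨N2, hN2⟩ := key hb d hc0 hc1 δ0 s0 s1
    obtain ⟨n0, hn0⟩ := eventually_atTop.1
      ((hT.eventually_ge_atTop N1).and (hT.eventually_ge_atTop N2))
    refine ⟨n0, fun n hn => ?_⟩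
    obtain ⟨h1, h2⟩ := hn0 n hn
    have q := hp1 n
    have q' := hpe n
    have hk := hN2 (E.V n) (E.G n) (E.degree_le n) (E.cheeger_gt n) h2 (pstar n) (p n)
      (by linarith [q.1]) (by linarith [q.2]) (by nlinarith [q.1, q.2]) (hp n).2
      (by
        refine δ2.trans (le_of_eq ?_)
        rw [← hp2 n h1])
    have hk' : 1 - δ ≤ Pr (p n) {x : (E.G n).edgeSet → Bool |
        c * (Fintype.card (E.V n) : ℝ) ≤ (largestComp (E.G n) x : ℝ)} := by
      convert hk
    have hle := Pr_le_one (hp n).1 (hp n).2 {x : (E.G n).edgeSet → Bool |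
        c * (Fintype.card (E.V n) : ℝ) ≤ (largestComp (E.G n) x : ℝ)}
    rw [Real.dist_eq, abs_lt]
    constructor <;> linarith
  · intro p hp hpe
    rw [Metric.tendsto_atTop]
    intro δ' hδ'
    obtain ⟨δ, hδ⟩ : ∃ δ, δ = min (δ' / 2) (1 / 4) := ⟨_, rfl⟩
    have δ0 : 0 < δ := by rw [hδ]; apply lt_min <;> linarith
    have δ1 : δ ≤ δ' / 2 := by rw [hδ]; exact min_le_left _ _
    have δ2 : δ ≤ 1 / 4 := by rw [hδ]; exact min_le_right _ _
    obtain ⟨N2, hN2⟩ := key hb d hc0 hc1 δ0 s0 s1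
    obtain ⟨n0, hn0⟩ := eventually_atTop.1
      ((hT.eventually_ge_atTop N1).and (hT.eventually_ge_atTop N2))
    refine ⟨n0, fun n hn => ?_⟩
    obtain ⟨h1, h2⟩ := hn0 n hn
    have q := hp1 n
    have q' := hpe n
    have hlt : Pr (p n) {x : (E.G n).edgeSet → Bool |
        c * (Fintype.card (E.V n) : ℝ) ≤ (largestComp (E.G n) x : ℝ)} < δ := by
      by_contra hge
      push Not at hge
      have hk := hN2 (E.V n) (E.G n) (E.degree_le n) (E.cheeger_gt n) h2 (p n) (pstar n)
        (hp n).1 (hp n).2 (by nlinarith [(hp n).1, (hp n).2]) (by linarith [q.2])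
        (by convert hge)
      have hk' : 1 - δ ≤ Pr (pstar n) {x : (E.G n).edgeSet → Bool |
          c * (Fintype.card (E.V n) : ℝ) ≤ (largestComp (E.G n) x : ℝ)} := by
        convert hk
      rw [hp2 n h1] at hk'
      linarith
    have hle := Pr_nonneg (hp n).1 (hp n).2 {x : (E.G n).edgeSet → Bool |
        c * (Fintype.card (E.V n) : ℝ) ≤ (largestComp (E.G n) x : ℝ)}
    rw [Real.dist_eq, abs_lt]
    constructor <;> linarith
end
end

section
/- Let b>0, d∈ℕ and let (G_n)_{n≥0} be a (b,d)-expander, and let c∈(0,1). There are a constant q_1∈(0,1), depending only on d, and a constant q_2(c)∈(q_1,1) such that: (i) for every α∈(0,1), for all n large enough, q_1 < p_{n,α}(c) < q_2(c); and (ii) there exist strictly positive constants C_1 and C_2, depending only on b and d, such that for every n and every p ≥ q_2(c), μ_{n,p}(L_n^{(1)} ≥ c|V_n|) ≥ 1 − C_1·exp(−C_2·|V_n|/log|V_n|). -/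
open Filter

noncomputable section

section helpers

open Classical in
lemma configProb_eq {E : Type*} [Fintype E] (p : ℝ) (x : E → Bool) :
    configProb p x = ∏ e : E, if x e then p else 1 - p :=
  finprod_eq_prod_of_fintype _

open Classical in
lemma probC_eq {E : Type*} [Fintype E] (p : ℝ) (A : Set (E → Bool)) :
    probC p A = ∑ x : E → Bool, if x ∈ A then configProb p x else 0 := by
  unfold probC
  rw [finsum_eq_sum_of_fintype]
  refine Finset.sum_congr rfl fun x _ => ?_
  by_cases h : x ∈ A <;> simp [h]

lemma configProb_nonneg {E : Type*} [Fintype E] {p : ℝ} (h0 : 0 ≤ p) (h1 : p ≤ 1)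
    (x : E → Bool) : 0 ≤ configProb p x := by
  rw [configProb_eq]
  refine Finset.prod_nonneg fun e _ => ?_
  split_ifs <;> linarith

open Classical in
lemma probC_cyl {E : Type*} [Fintype E] (p : ℝ) (F : Finset E) (b : Bool) :
    probC p {x : E → Bool | ∀ e ∈ F, x e = b} = (if b then p else 1 - p) ^ F.card := by
  obtain ⟨A, hA⟩ : ∃ A, A = {x : E → Bool | ∀ e ∈ F, x e = b} := ⟨_, rfl⟩
  rw [← hA, probC_eq]
  have h1 : ∀ x : E → Bool, (if x ∈ A then configProb p x else 0)
      = ∏ e, (if e ∈ F then (if x e = b then (if b then p else 1 - p) else 0)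
          else (if x e then p else 1 - p)) := by
    intro x
    by_cases h : ∀ e ∈ F, x e = b
    · rw [if_pos (show x ∈ A from hA ▸ h), configProb_eq]
      refine Finset.prod_congr rfl fun e _ => ?_
      by_cases he : e ∈ F
      · have := h e he
        simp [he, this]
      · simp [he]
    · rw [if_neg (show x ∉ A from hA ▸ h)]
      push Not at h
      obtain ⟨e, he, hx⟩ := h
      symm
      apply Finset.prod_eq_zero (Finset.mem_univ e)
      simp [he, hx]
  simp_rw [h1]
  have h2 := Finset.prod_univ_sum (fun _ : E => (Finset.univ : Finset Bool))
    (fun e y => (if e ∈ F then (if y = b then (if b then p else 1 - p) else 0)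
          else (if y then p else 1 - p)))
  rw [Fintype.piFinset_univ] at h2
  rw [← h2]
  have h3 : ∀ e : E, (∑ y : Bool, (if e ∈ F then (if y = b then (if b then p else 1 - p) else 0)
          else (if y then p else 1 - p))) = if e ∈ F then (if b then p else 1 - p) else 1 := by
    intro e
    by_cases he : e ∈ F
    · simp [he]
    · simp [he]
  simp_rw [h3]
  rw [Finset.prod_ite]
  simp

lemma probC_univ {E : Type*} [Fintype E] (p : ℝ) : probC p (Set.univ : Set (E → Bool)) = 1 := by
  have := probC_cyl (E := E) p ∅ true
  simpa using this

lemma probC_nonneg {E : Type*} [Fintype E] {p : ℝ} (h0 : 0 ≤ p) (h1 : p ≤ 1)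
    (A : Set (E → Bool)) : 0 ≤ probC p A := by
  classical
  rw [probC_eq]
  refine Finset.sum_nonneg fun x _ => ?_
  split_ifs
  · exact configProb_nonneg h0 h1 x
  · exact le_rfl

lemma probC_compl {E : Type*} [Fintype E] (p : ℝ) (A : Set (E → Bool)) :
    probC p A = 1 - probC p Aᶜ := by
  classical
  rw [← probC_univ (E := E) p]
  simp only [probC_eq, ← Finset.sum_sub_distrib]
  refine Finset.sum_congr rfl fun x _ => ?_
  by_cases h : x ∈ A <;> simp [h]

lemma probC_union {E ι : Type*} [Fintype E] {p : ℝ} (h0 : 0 ≤ p) (h1 : p ≤ 1)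
    (s : Finset ι) (A : Set (E → Bool)) (B : ι → Set (E → Bool))
    (h : ∀ x ∈ A, ∃ i ∈ s, x ∈ B i) : probC p A ≤ ∑ i ∈ s, probC p (B i) := by
  classical
  simp only [probC_eq]
  rw [Finset.sum_comm]
  refine Finset.sum_le_sum fun x _ => ?_
  have hn : ∀ i ∈ s, 0 ≤ (if x ∈ B i then configProb p x else 0) := by
    intro i _
    split_ifs
    · exact configProb_nonneg h0 h1 x
    · exact le_rfl
  split_ifs with hx
  · obtain ⟨i, hi, hxi⟩ := h x hx
    have := Finset.single_le_sum hn hi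
    simpa [hxi] using this
  · exact Finset.sum_nonneg hn

lemma probC_markov {E ι : Type*} [Fintype E] {p : ℝ} (h0 : 0 ≤ p) (h1 : p ≤ 1)
    (s : Finset ι) (A : Set (E → Bool)) (B : ι → Set (E → Bool)) (K : ℝ)
    (h : ∀ x ∈ A, ∃ t ⊆ s, K ≤ (t.card : ℝ) ∧ ∀ i ∈ t, x ∈ B i) :
    K * probC p A ≤ ∑ i ∈ s, probC p (B i) := by
  classical
  simp only [probC_eq]
  rw [Finset.sum_comm, Finset.mul_sum]
  refine Finset.sum_le_sum fun x _ => ?_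
  have hq := configProb_nonneg h0 h1 x
  have hn : ∀ i, 0 ≤ (if x ∈ B i then configProb p x else 0) := by
    intro i
    split_ifs
    · exact hq
    · exact le_rfl
  by_cases hx : x ∈ A
  · rw [if_pos hx]
    obtain ⟨t, hts, hK, ht⟩ := h x hx
    calc K * configProb p x ≤ t.card * configProb p x := by gcongr
      _ = ∑ i ∈ t, configProb p x := by rw [Finset.sum_const, nsmul_eq_mul]
      _ = ∑ i ∈ t, (if x ∈ B i then configProb p x else 0) :=
          Finset.sum_congr rfl fun i hi => by rw [if_pos (ht i hi)]
      _ ≤ _ := Finset.sum_le_sum_of_subset_of_nonneg hts fun i _ _ => hn i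
  · rw [if_neg hx, mul_zero]
    exact Finset.sum_nonneg fun i _ => hn i

/-- A union of components of intermediate size. -/
lemma exists_mid {V : Type*} [Fintype V] [DecidableEq V] (H : SimpleGraph V) (hN : 0 < Fintype.card V)
    (c : ℝ) (hc : ∀ v, (({u | H.Reachable v u} : Set V).ncard : ℝ) < c * Fintype.card V) :
    ∃ A : Finset V, (∀ u v, H.Adj u v → u ∈ A → v ∈ A) ∧ 2 * A.card ≤ Fintype.card V ∧
      (1 - c) / 2 * Fintype.card V ≤ A.card := by
  classical
  let P : Finset (Finset V) := Finset.univ.filter fun A =>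
    (∀ u v, H.Adj u v → u ∈ A → v ∈ A) ∧ 2 * A.card ≤ Fintype.card V
  have hP : P.Nonempty := ⟨∅, by simp [P]⟩
  obtain ⟨A, hA, hmax⟩ := Finset.exists_max_image P Finset.card hP
  simp only [P, Finset.mem_filter, Finset.mem_univ, true_and] at hA hmax
  obtain ⟨hA1, hA2⟩ := hA
  refine ⟨A, hA1, hA2, ?_⟩
  have : ∃ v, v ∉ A := by
    by_contra! hall
    have : A = Finset.univ := by ext v; simp [hall v]
    rw [this, Finset.card_univ] at hA2
    omega
  obtain ⟨v, hv⟩ := this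
  let C : Finset V := Finset.univ.filter fun u => H.Reachable v u
  have hC : ∀ u w, H.Adj u w → u ∈ C → w ∈ C := by
    intro u w huw hu
    simp only [C, Finset.mem_filter, Finset.mem_univ, true_and] at hu ⊢
    exact hu.trans huw.reachable
  have hCc : (C.card : ℝ) < c * Fintype.card V := by
    have h := hc v
    have h2 : ({u | H.Reachable v u} : Set V) = (C : Set V) := by ext u; simp [C]
    rwa [h2, Set.ncard_coe_finset] at h
  have hAC : ∀ u w, H.Adj u w → u ∈ A ∪ C → w ∈ A ∪ C := by
    intro u w huw hu
    rcases Finset.mem_union.1 hu with h | h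
    · exact Finset.mem_union_left _ (hA1 u w huw h)
    · exact Finset.mem_union_right _ (hC u w huw h)
  have hvC : v ∈ C := by simp [C]
  have hlt : A.card < (A ∪ C).card := by
    apply Finset.card_lt_card
    refine ⟨Finset.subset_union_left, fun h => hv (h (Finset.mem_union_right _ hvC))⟩
  have hbig : Fintype.card V < 2 * (A ∪ C).card := by
    by_contra! h
    have := hmax _ ⟨hAC, h⟩
    omega
  have hcompl := Finset.card_compl (A ∪ C)
  have hle := Finset.card_le_univ (A ∪ C)
  have hB : ((A ∪ C)ᶜ).card ≤ A.card := by
    apply hmax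
    refine ⟨fun u w huw hu => ?_, by omega⟩
    rw [Finset.mem_compl] at hu ⊢
    exact fun h => hu (hAC w u huw.symm h)
  have hu := Finset.card_union_le A C
  have : Fintype.card V ≤ 2 * A.card + C.card := by omega
  have : (Fintype.card V : ℝ) ≤ 2 * A.card + C.card := by exact_mod_cast this
  linarith

lemma percoGraph_adj {V : Type*} (G : SimpleGraph V) (x : G.edgeSet → Bool) (u v : V)
    (h : G.Adj u v) (hx : x ⟨s(u, v), h⟩ = true) : (percoGraph G x).Adj u v := by
  unfold percoGraph
  rw [SimpleGraph.fromEdgeSet_adj]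
  exact ⟨⟨h, hx⟩, h.ne⟩

lemma percoGraph_edge {V : Type*} (G : SimpleGraph V) (x : G.edgeSet → Bool) (e : Sym2 V)
    (h : e ∈ (percoGraph G x).edgeSet) : ∃ h : e ∈ G.edgeSet, x ⟨e, h⟩ = true := by
  unfold percoGraph at h
  rw [SimpleGraph.edgeSet_fromEdgeSet] at h
  exact h.1

lemma percoGraph_le {V : Type*} (G : SimpleGraph V) (x : G.edgeSet → Bool) :
    percoGraph G x ≤ G := by
  intro u v h
  obtain ⟨h, _⟩ := percoGraph_edge G x s(u, v) h
  exact h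

lemma boundary_finset {V : Type*} [Fintype V] (G : SimpleGraph V) [Fintype G.edgeSet]
    (A : Finset V) :
    ∃ F : Finset G.edgeSet, F.card = edgeBoundaryCard G (A : Set V) ∧
      ∀ e ∈ F, ∃ u v, ∃ h : G.Adj u v, u ∈ A ∧ v ∉ A ∧ e = ⟨s(u, v), h⟩ := by
  classical
  let S : Set (V × V) := {q : V × V | G.Adj q.1 q.2 ∧ q.1 ∈ (A : Set V) ∧ q.2 ∉ (A : Set V)}
  let f : S → G.edgeSet := fun q => ⟨s(q.1.1, q.1.2), q.2.1⟩
  have hf : Function.Injective f := by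
    rintro ⟨⟨a, b⟩, h1, h2, h3⟩ ⟨⟨a', b'⟩, h1', h2', h3'⟩ h
    have h' : s(a, b) = s(a', b') := congrArg Subtype.val h
    rcases Sym2.eq_iff.1 h' with ⟨rfl, rfl⟩ | ⟨rfl, rfl⟩
    · rfl
    · exact absurd h2 h3'
  refine ⟨Finset.univ.image f, ?_, ?_⟩
  · rw [Finset.card_image_of_injective _ hf, Finset.card_univ, ← Nat.card_eq_fintype_card]
    rfl
  · intro e he
    obtain ⟨q, _, rfl⟩ := Finset.mem_image.1 he
    exact ⟨q.1.1, q.1.2, q.2.1, q.2.2.1, q.2.2.2, rfl⟩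

lemma compSize_le {V : Type*} [Fintype V] (G : SimpleGraph V) (x : G.edgeSet → Bool) (v : V) :
    compSize G x v ≤ largestComp G x :=
  le_csSup (Set.finite_range _).bddAbove ⟨v, rfl⟩

lemma exists_compSize {V : Type*} [Fintype V] [Nonempty V] (G : SimpleGraph V)
    (x : G.edgeSet → Bool) : ∃ v, compSize G x v = largestComp G x :=
  Nat.sSup_mem (Set.range_nonempty (compSize G x)) (Set.finite_range _).bddAbove

lemma upper_bound {V : Type*} [Fintype V] (G : SimpleGraph V) (b c : ℝ) (hb : 0 < b)
    (hc : c < 1) (hG : CheegerGT G b) (p : ℝ) (h0 : 0 ≤ p)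
    (hp : 1 - p ≤ Real.exp (-4 / (b * (1 - c)))) (h1 : p ≤ 1) :
    1 - Real.exp (-(Fintype.card V : ℝ)) ≤ probC p {x : G.edgeSet → Bool |
      c * (Fintype.card V : ℝ) ≤ (largestComp G x : ℝ)} := by
  classical
  rw [probC_compl]
  rcases Nat.eq_zero_or_pos (Fintype.card V) with hN | hN
  · rw [hN]
    have h := probC_compl p {x : G.edgeSet → Bool | c * ((0 : ℕ) : ℝ) ≤ (largestComp G x : ℝ)}
    have h2 := probC_nonneg h0 h1
      {x : G.edgeSet → Bool | c * ((0 : ℕ) : ℝ) ≤ (largestComp G x : ℝ)}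
    simp only [Nat.cast_zero, neg_zero, Real.exp_zero] at *
    linarith
  choose F hF1 hF2 using boundary_finset G
  let s : Finset (Finset V) := Finset.univ.filter fun A => 2 * A.card ≤ Fintype.card V ∧
      (1 - c) / 2 * Fintype.card V ≤ A.card
  have hu := probC_union h0 h1 s
    {x : G.edgeSet → Bool | c * (Fintype.card V : ℝ) ≤ (largestComp G x : ℝ)}ᶜ
    (fun A => {x : G.edgeSet → Bool | ∀ e ∈ F A, x e = false}) (by
      intro x hx
      simp only [Set.mem_compl_iff, Set.mem_ofPred_eq, not_le] at hx
      obtain ⟨A, hA1, hA2, hA3⟩ := exists_mid (percoGraph G x) hN c (fun v => by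
        have := compSize_le G x v
        have : (compSize G x v : ℝ) ≤ largestComp G x := by exact_mod_cast this
        exact lt_of_le_of_lt this hx)
      refine ⟨A, by simp [s, hA2, hA3], ?_⟩
      intro e he
      obtain ⟨u, v, h, hu, hv, rfl⟩ := hF2 A e he
      by_contra hx'
      exact hv (hA1 u v (percoGraph_adj G x u v h (by simpa using hx')) hu))
  have hterm : ∀ A ∈ s, probC p {x : G.edgeSet → Bool | ∀ e ∈ F A, x e = false} ≤
      Real.exp (-(2 * (Fintype.card V : ℝ))) := by
    intro A hA
    simp only [s, Finset.mem_filter, Finset.mem_univ, true_and] at hA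
    obtain ⟨hA2, hA3⟩ := hA
    rw [probC_cyl]
    have hNr : (0 : ℝ) < Fintype.card V := by exact_mod_cast hN
    have hApos : (0 : ℝ) < A.card := lt_of_lt_of_le (by have : 0 < 1 - c := by linarith
                                                        positivity) hA3
    have hch := hG (A : Set V) (by rw [Set.ncard_coe_finset]; exact_mod_cast hApos)
      (by rw [Set.ncard_coe_finset, Nat.card_eq_fintype_card]; exact hA2)
    rw [← hF1, Set.ncard_coe_finset] at hch
    have hbc : 0 < b * (1 - c) := mul_pos hb (by linarith)
    have hm : b * (1 - c) * Fintype.card V / 2 ≤ (F A).card := by nlinarith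
    calc (if false = true then p else 1 - p) ^ (F A).card
        ≤ Real.exp (-4 / (b * (1 - c))) ^ (F A).card := by
          simp only [Bool.false_eq_true, if_false]
          exact pow_le_pow_left₀ (by linarith) hp _
      _ = Real.exp ((F A).card * (-4 / (b * (1 - c)))) := by rw [← Real.exp_nat_mul]
      _ ≤ _ := by
          apply Real.exp_le_exp.2
          rw [mul_div_assoc', div_le_iff₀ hbc]
          nlinarith
  have hsum := Finset.sum_le_sum hterm
  rw [Finset.sum_const, nsmul_eq_mul] at hsum
  have hs : (s.card : ℝ) ≤ Real.exp (Fintype.card V : ℝ) := by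
    have h2 : s.card ≤ 2 ^ Fintype.card V := by
      refine (Finset.card_le_univ s).trans ?_
      rw [Fintype.card_finset]
    have h3 : (s.card : ℝ) ≤ 2 ^ Fintype.card V := by exact_mod_cast h2
    refine h3.trans ?_
    have h4 : (2 : ℝ) ≤ Real.exp 1 := by
      have := Real.add_one_le_exp (1 : ℝ)
      linarith
    calc (2 : ℝ) ^ Fintype.card V ≤ Real.exp 1 ^ Fintype.card V :=
          pow_le_pow_left₀ (by norm_num) h4 _
      _ = _ := by rw [← Real.exp_nat_mul, mul_one]
  have hfin : (s.card : ℝ) * Real.exp (-(2 * (Fintype.card V : ℝ))) ≤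
      Real.exp (-(Fintype.card V : ℝ)) := by
    calc _ ≤ Real.exp (Fintype.card V : ℝ) * Real.exp (-(2 * (Fintype.card V : ℝ))) := by
          gcongr
      _ = _ := by rw [← Real.exp_add]; congr 1; ring
  linarith

open Classical in
lemma walk_count {V : Type*} [Fintype V] (G : SimpleGraph V) (d : ℕ) (hd : DegreeLE G d)
    (k : ℕ) : ∀ u, ∑ v, (G.finsetWalkLength k u v).card ≤ d ^ k := by
  induction k with
  | zero =>
    intro u
    have h : ∀ v, (G.finsetWalkLength 0 u v).card ≤ if u = v then 1 else 0 := by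
      intro v
      by_cases h : u = v
      · subst h; simp [SimpleGraph.finsetWalkLength]
      · simp [SimpleGraph.finsetWalkLength, h]
    refine (Finset.sum_le_sum fun v _ => h v).trans ?_
    simp
  | succ k ih =>
    intro u
    have h : ∀ v, (G.finsetWalkLength (k + 1) u v).card ≤
        ∑ w : G.neighborSet u, (G.finsetWalkLength k w v).card := by
      intro v
      rw [SimpleGraph.finsetWalkLength]
      refine Finset.card_biUnion_le.trans ?_
      simp
    refine (Finset.sum_le_sum fun v _ => h v).trans ?_
    rw [Finset.sum_comm]
    refine (Finset.sum_le_sum fun (w : G.neighborSet u) _ => ih (w : V)).trans ?_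
    rw [Finset.sum_const, Finset.card_univ, smul_eq_mul, pow_succ, mul_comm]
    refine Nat.mul_le_mul_left _ ?_
    rw [← Nat.card_eq_fintype_card]
    exact hd u

open Classical in
lemma reach_prob {V : Type*} [Fintype V] (G : SimpleGraph V) (p : ℝ) (h0 : 0 ≤ p) (h1 : p ≤ 1)
    (u v : V) :
    probC p {x : G.edgeSet → Bool | (percoGraph G x).Reachable u v} ≤
      ∑ k ∈ Finset.range (Fintype.card V), (G.finsetWalkLength k u v).card * p ^ k := by
  let s : Finset (G.Walk u v) := ((Finset.range (Fintype.card V)).biUnion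
    fun k => (G.finsetWalkLength k u v).filter fun w => w.IsPath)
  have hu := probC_union h0 h1
    ((Finset.range (Fintype.card V)).sigma
      fun k => (G.finsetWalkLength k u v).filter fun w => w.IsPath)
    {x : G.edgeSet → Bool | (percoGraph G x).Reachable u v}
    (fun w => {x | ∀ e ∈ (Finset.univ.filter fun e : G.edgeSet => (e : Sym2 V) ∈ w.2.edges),
      x e = true}) (by
      intro x hx
      obtain ⟨w, hw⟩ := SimpleGraph.Reachable.exists_isPath hx
      refine ⟨⟨w.length, w.mapLe (percoGraph_le G x)⟩, ?_, ?_⟩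
      · simp only [Finset.mem_sigma, Finset.mem_range, Finset.mem_filter,
          SimpleGraph.mem_finsetWalkLength_iff]
        exact ⟨hw.length_lt, by simp, hw.mapLe _⟩
      · intro e he
        simp only [Finset.mem_filter, Finset.mem_univ, true_and] at he
        rw [SimpleGraph.Walk.edges_mapLe_eq_edges] at he
        obtain ⟨h, hx⟩ := percoGraph_edge G x e (w.edges_subset_edgeSet he)
        exact hx)
  refine hu.trans ?_
  rw [Finset.sum_sigma]
  refine Finset.sum_le_sum fun k _ => ?_
  have : ∀ w ∈ (G.finsetWalkLength k u v).filter fun w => w.IsPath,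
      probC p {x : G.edgeSet → Bool |
        ∀ e ∈ (Finset.univ.filter fun e : G.edgeSet => (e : Sym2 V) ∈ w.edges), x e = true}
      ≤ p ^ k := by
    intro w hw
    simp only [Finset.mem_filter, SimpleGraph.mem_finsetWalkLength_iff] at hw
    rw [probC_cyl]
    have hcard : (Finset.univ.filter fun e : G.edgeSet => (e : Sym2 V) ∈ w.edges).card = k := by
      rw [← Finset.card_map (Function.Embedding.subtype _)]
      have : (Finset.univ.filter fun e : G.edgeSet => (e : Sym2 V) ∈ w.edges).map
          (Function.Embedding.subtype _) = w.edges.toFinset := by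
        ext e
        simp only [Finset.mem_map, Finset.mem_filter, Finset.mem_univ, true_and,
          Function.Embedding.coe_subtype, Subtype.exists, List.mem_toFinset]
        constructor
        · rintro ⟨a, ha, h, rfl⟩
          exact h
        · intro h
          exact ⟨e, w.edges_subset_edgeSet h, h, rfl⟩
      rw [this, List.toFinset_card_of_nodup hw.2.isTrail.edges_nodup,
        SimpleGraph.Walk.length_edges, hw.1]
    rw [hcard]
    simp
  refine (Finset.sum_le_sum this).trans ?_
  rw [Finset.sum_const, nsmul_eq_mul]
  have hcf := Finset.card_filter_le (G.finsetWalkLength k u v) (fun w => w.IsPath)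
  gcongr

lemma chi_bound {V : Type*} [Fintype V] (G : SimpleGraph V) (d : ℕ) (hd : DegreeLE G d)
    (p : ℝ) (h0 : 0 ≤ p) (h1 : p ≤ 1) (hp : d * p ≤ 1 / 2) (u : V) :
    ∑ v, probC p {x : G.edgeSet → Bool | (percoGraph G x).Reachable u v} ≤ 2 := by
  classical
  refine (Finset.sum_le_sum fun v _ => reach_prob G p h0 h1 u v).trans ?_
  rw [Finset.sum_comm]
  have h : ∀ k ∈ Finset.range (Fintype.card V),
      ∑ v, ((G.finsetWalkLength k u v).card : ℝ) * p ^ k ≤ (1 / 2) ^ k := by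
    intro k _
    rw [← Finset.sum_mul]
    have := walk_count G d hd k u
    have h2 : ∑ v, ((G.finsetWalkLength k u v).card : ℝ) ≤ (d : ℝ) ^ k := by
      exact_mod_cast this
    calc _ ≤ (d : ℝ) ^ k * p ^ k := by gcongr
      _ = (d * p) ^ k := by rw [mul_pow]
      _ ≤ _ := by gcongr
  refine (Finset.sum_le_sum h).trans ?_
  exact sum_geometric_two_le _

lemma lower_bound {V : Type*} [Fintype V] (G : SimpleGraph V) (d : ℕ) (hd : DegreeLE G d)
    (p : ℝ) (h0 : 0 ≤ p) (h1 : p ≤ 1) (hp : d * p ≤ 1 / 2) (c : ℝ) (hc : 0 < c)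
    (hN : 0 < Fintype.card V) :
    c ^ 2 * Fintype.card V * probC p {x : G.edgeSet → Bool |
      c * (Fintype.card V : ℝ) ≤ (largestComp G x : ℝ)} ≤ 2 := by
  classical
  have hNr : (0 : ℝ) < Fintype.card V := by exact_mod_cast hN
  have hne : Nonempty V := Fintype.card_pos_iff.1 hN
  have hsum : ∑ u : V, ∑ v, probC p {x : G.edgeSet → Bool | (percoGraph G x).Reachable u v} ≤
      Fintype.card V * 2 := by
    refine (Finset.sum_le_sum fun u _ => chi_bound G d hd p h0 h1 hp u).trans ?_
    simp
  have key : (c * Fintype.card V) ^ 2 * probC p {x : G.edgeSet → Bool |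
      c * (Fintype.card V : ℝ) ≤ (largestComp G x : ℝ)} ≤
      ∑ u : V, ∑ v, probC p {x : G.edgeSet → Bool | (percoGraph G x).Reachable u v} := by
    rw [← Finset.sum_product']
    apply probC_markov h0 h1
    intro x hx
    obtain ⟨w, hw⟩ := exists_compSize G x
    let C : Finset V := Finset.univ.filter fun u => (percoGraph G x).Reachable w u
    have hC : (C.card : ℝ) = largestComp G x := by
      rw [← hw]
      unfold compSize
      have h2 : percoComp G x w = (C : Set V) := by ext u; simp [C, percoComp]
      rw [h2, Set.ncard_coe_finset]
    have hx' : c * (Fintype.card V : ℝ) ≤ C.card := by rw [hC]; exact hx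
    refine ⟨C ×ˢ C, fun _ _ => by simp, ?_, ?_⟩
    · rw [Finset.card_product, Nat.cast_mul, ← pow_two]
      gcongr
    · intro i hi
      simp only [C, Finset.mem_product, Finset.mem_filter, Finset.mem_univ, true_and] at hi
      exact hi.1.symm.trans hi.2
  have h3 := key.trans hsum
  refine le_of_mul_le_mul_left ?_ hNr
  calc _ = (c * Fintype.card V) ^ 2 * probC p {x : G.edgeSet → Bool |
      c * (Fintype.card V : ℝ) ≤ (largestComp G x : ℝ)} := by ring
    _ ≤ _ := h3

end helpers

/-- the thresholds `p_{n,α}(c)` are bounded away from 0 and 1: there is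
`q₁ ∈ (0,1)` depending only on `d`, constants `C₁, C₂ > 0` depending only on `b` and `d`,
and `q₂(c) ∈ (q₁,1)` such that (i) for every `α ∈ (0,1)` and all `n` large enough any
`p ∈ [0,1]` with `μ_{n,p}(L_n ≥ c|V_n|) = α` lies in `(q₁, q₂)`; and (ii) for every `n`
and every `p ≥ q₂`, `μ_{n,p}(L_n ≥ c|V_n|) ≥ 1 - C₁ exp(-C₂ |V_n| / log |V_n|)`. -/
theorem stmt2 (d : ℕ) :
    ∃ q1 ∈ Set.Ioo (0 : ℝ) 1, ∀ b : ℝ, 0 < b →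
      ∃ C1 > (0 : ℝ), ∃ C2 > (0 : ℝ), ∀ c ∈ Set.Ioo (0 : ℝ) 1,
        ∃ q2 ∈ Set.Ioo q1 1,
          (∀ E : ExpanderSeq b d, ∀ α ∈ Set.Ioo (0 : ℝ) 1, ∃ N : ℕ, ∀ n ≥ N,
            ∀ p ∈ Set.Icc (0 : ℝ) 1,
              probC p {x : (E.G n).edgeSet → Bool |
                  c * (Nat.card (E.V n) : ℝ) ≤ (largestComp (E.G n) x : ℝ)} = α →
              p ∈ Set.Ioo q1 q2) ∧
          (∀ (E : ExpanderSeq b d) (n : ℕ), ∀ p : ℝ, q2 ≤ p → p ≤ 1 →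
            1 - C1 * Real.exp (-C2 * (Nat.card (E.V n) : ℝ) / Real.log (Nat.card (E.V n))) ≤
              probC p {x : (E.G n).edgeSet → Bool |
                c * (Nat.card (E.V n) : ℝ) ≤ (largestComp (E.G n) x : ℝ)}) := by
  have hd2 : (0 : ℝ) < 2 * d + 2 := by positivity
  refine ⟨1 / (2 * d + 2), ⟨by positivity, by rw [div_lt_one hd2]; linarith [(Nat.cast_nonneg d : (0 : ℝ) ≤ d)]⟩, ?_⟩
  have hq1 : (1 : ℝ) / (2 * d + 2) ≤ 1 / 2 := by
    apply one_div_le_one_div_of_le <;> linarith [(Nat.cast_nonneg d : (0 : ℝ) ≤ d)]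
  have hdq : (d : ℝ) * (1 / (2 * d + 2)) ≤ 1 / 2 := by
    rw [mul_one_div, div_le_iff₀ hd2]; linarith
  intro b hb
  refine ⟨1, one_pos, Real.log 2, Real.log_pos (by norm_num), ?_⟩
  rintro c ⟨hc0, hc1⟩
  have hbc : 0 < b * (1 - c) := mul_pos hb (by linarith)
  set ε := Real.exp (-4 / (b * (1 - c))) with hε
  have hε0 : 0 < ε := Real.exp_pos _
  have hε1 : ε < 1 := by
    rw [hε, Real.exp_lt_one_iff]
    exact div_neg_of_neg_of_pos (by norm_num) hbc
  have main : ∀ (E : ExpanderSeq b d) (n : ℕ), ∀ p : ℝ, 1 - ε / 2 ≤ p → p ≤ 1 →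
      1 - Real.exp (-(Nat.card (E.V n) : ℝ)) ≤ probC p {x : (E.G n).edgeSet → Bool |
                c * (Nat.card (E.V n) : ℝ) ≤ (largestComp (E.G n) x : ℝ)} := by
    intro E n p hp hp1
    have := E.finV n
    have : Fintype (E.V n) := Fintype.ofFinite _
    rw [Nat.card_eq_fintype_card]
    exact upper_bound (E.G n) b c hb hc1 (E.cheeger_gt n) p (by linarith) (by linarith) hp1
  refine ⟨1 - ε / 2, ⟨by linarith, by linarith⟩, ?_, ?_⟩
  · rintro E α ⟨hα0, hα1⟩
    have ht : Tendsto (fun n => (Nat.card (E.V n) : ℝ)) atTop atTop :=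
      tendsto_natCast_atTop_atTop.comp E.card_tendsto
    have he : Tendsto (fun n => Real.exp (-(Nat.card (E.V n) : ℝ))) atTop (nhds 0) :=
      Real.tendsto_exp_neg_atTop_nhds_zero.comp ht
    have ev1 := he.eventually_lt_const (show (0 : ℝ) < 1 - α by linarith)
    have ev2 := ht.eventually_gt_atTop (2 / (c ^ 2 * α))
    obtain ⟨N, hN⟩ := eventually_atTop.1 (ev1.and ev2)
    refine ⟨N, fun n hn p hp hprob => ?_⟩
    obtain ⟨hn1, hn2⟩ := hN n hn
    constructor
    · by_contra! hle
      have := E.finV n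
      have : Fintype (E.V n) := Fintype.ofFinite _
      have hca : 0 < c ^ 2 * α := by positivity
      have hpos : (0 : ℝ) < Nat.card (E.V n) := lt_trans (by positivity) hn2
      have hpos' : 0 < Fintype.card (E.V n) := by
        rw [← Nat.card_eq_fintype_card]; exact_mod_cast hpos
      have hl := lower_bound (E.G n) d (E.degree_le n) p hp.1 hp.2
        ((mul_le_mul_of_nonneg_left hle (Nat.cast_nonneg d)).trans hdq) c hc0 hpos'
      rw [← Nat.card_eq_fintype_card, hprob] at hl
      rw [div_lt_iff₀ hca] at hn2
      nlinarith
    · by_contra! hle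
      have := main E n p hle hp.2
      rw [hprob] at this
      linarith
  · intro E n p hp hp1
    refine le_trans ?_ (main E n p hp hp1)
    rw [one_mul]
    have hle : -(Nat.card (E.V n) : ℝ) ≤
        -Real.log 2 * (Nat.card (E.V n) : ℝ) / Real.log (Nat.card (E.V n)) := by
      have hN0 : (0 : ℝ) ≤ Nat.card (E.V n) := Nat.cast_nonneg _
      by_cases h2 : Nat.card (E.V n) < 2
      · have : Real.log (Nat.card (E.V n)) = 0 := by
          interval_cases (Nat.card (E.V n)) <;> simp
        rw [this, div_zero]
        linarith
      · have h2' : (2 : ℝ) ≤ Nat.card (E.V n) := by exact_mod_cast not_lt.1 h2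
        have hl : Real.log 2 ≤ Real.log (Nat.card (E.V n)) :=
          Real.log_le_log (by norm_num) h2'
        have hl2 : 0 < Real.log 2 := Real.log_pos (by norm_num)
        rw [le_div_iff₀ (by linarith)]
        nlinarith
    linarith [Real.exp_le_exp.2 hle]
end
end
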